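/- Let r ≥ 3 and q = p^h > 4 with p prime, h ≥ 1, and let V be a quasi-Hermitian variety of PG(r,q^2) whose characteristic vector v^V belongs to C_p. Let π be a plane of PG(r,q^2) with |π ∩ V| ≤ q^3 + 2q^2, and suppose that whenever q^3 + 1 ≤ |π ∩ V|, there exists a line of π meeting π ∩ V in at least q^2 - q + 1 points. Then there exist at most q+1 distinct lines of π such that the characteristic vector of π ∩ V (as a function on the points of π with values in F_p) equals the sum of the characteristic vectors of these lines, each with coefficient 1. -/

import Mathlib

/-!
Common framework: `ProjPoint F n` is the set of points of the projective space
PG(n-1, |F|) (so PG(r, q²) corresponds to `n = r + 1` and `Fintype.card F = q ^ 2`).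
Projective subspaces of projective dimension `k` are the submodules of `Fin n → F`
of `finrank` equal to `k + 1`; lines have finrank 2, planes finrank 3 and
hyperplanes finrank `n - 1 = r`.
-/

open Module Matrix

/-- The points of the projective space PG(n-1, |F|): one-dimensional subspaces
of `F^n`. -/
def ProjPoint (F : Type) [Field F] (n : ℕ) : Type :=
  {W : Submodule F (Fin n → F) // finrank F W = 1}

/-- The set of projective points lying in a given subspace `W`. -/
def pointsIn (F : Type) [Field F] (n : ℕ) (W : Submodule F (Fin n → F)) :
    Set (ProjPoint F n) :=
  {P | P.1 ≤ W}

/-- The number of points of `V` lying in the subspace `W`. -/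
noncomputable def secant (F : Type) [Field F] (n : ℕ) (V : Set (ProjPoint F n))
    (W : Submodule F (Fin n → F)) : ℕ :=
  (V ∩ pointsIn F n W).ncard

/-- The characteristic vector of a set of projective points, with values in `F_p`. -/
noncomputable def charVec (F : Type) [Field F] (p n : ℕ) (S : Set (ProjPoint F n)) :
    ProjPoint F n → ZMod p :=
  Set.indicator S 1

/-- `C_p`: the `F_p`-code spanned by the characteristic vectors of hyperplanes. -/
def hypCode (F : Type) [Field F] (p n : ℕ) :
    Submodule (ZMod p) (ProjPoint F n → ZMod p) :=
  Submodule.span (ZMod p)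
    {v | ∃ H : Submodule F (Fin n → F), finrank F H = n - 1 ∧
      v = charVec F p n (pointsIn F n H)}

/-- A quasi-Hermitian variety of PG(r, q²): it has the size of a non-singular
Hermitian variety and the same two intersection numbers with hyperplanes.
(All identities are stated multiplied through by `q² - 1`.) -/
def IsQuasiHermitian (F : Type) [Field F] (q r : ℕ)
    (V : Set (ProjPoint F (r + 1))) : Prop :=
  (V.ncard : ℤ) * ((q : ℤ) ^ 2 - 1)
      = ((q : ℤ) ^ (r + 1) + (-1) ^ r) * ((q : ℤ) ^ r - (-1) ^ r) ∧
  ∀ H : Submodule F (Fin (r + 1) → F), finrank F H = r →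
    ((secant F (r + 1) V H : ℤ) * ((q : ℤ) ^ 2 - 1)
        = ((q : ℤ) ^ r + (-1) ^ (r - 1)) * ((q : ℤ) ^ (r - 1) - (-1) ^ (r - 1)) ∨
     (secant F (r + 1) V H : ℤ) * ((q : ℤ) ^ 2 - 1)
        = ((q : ℤ) ^ 2 - 1)
          + (q : ℤ) ^ 2 * (((q : ℤ) ^ (r - 1) + (-1) ^ r) * ((q : ℤ) ^ (r - 2) - (-1) ^ r)))

/-- The zero set, in PG(n-1,|F|), of the Hermitian form `x ↦ xᵀ A x^(q)`. -/
def hermSet (F : Type) [Field F] (q n : ℕ) (A : Matrix (Fin n) (Fin n) F) :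
    Set (ProjPoint F n) :=
  {P | ∀ x ∈ P.1, ∑ i, ∑ j, x i * A i j * (x j) ^ q = 0}

/-- A non-singular Hermitian variety of PG(n-1, q²). -/
def IsNonsingHermitian (F : Type) [Field F] (q n : ℕ)
    (V : Set (ProjPoint F n)) : Prop :=
  ∃ A : Matrix (Fin n) (Fin n) F, IsUnit A.det ∧
    Aᵀ = A.map (fun a => a ^ q) ∧ V = hermSet F q n A

/-- A singular Hermitian variety of PG(n-1, q²) whose singular space (the radical
of the Hermitian form) has projective dimension `d`. -/
def IsSingularHermitian (F : Type) [Field F] (q n d : ℕ)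
    (S : Set (ProjPoint F n)) : Prop :=
  ∃ A : Matrix (Fin n) (Fin n) F,
    Aᵀ = A.map (fun a => a ^ q) ∧
    finrank F (LinearMap.ker (Matrix.toLin' Aᵀ)) = d + 1 ∧
    S = hermSet F q n A

/-- A `d`-singular quasi-Hermitian variety of PG(r, q²). -/
def IsSingularQuasiHermitian (F : Type) [Field F] (q r d : ℕ)
    (S : Set (ProjPoint F (r + 1))) : Prop :=
  ∃ S₀ : Set (ProjPoint F (r + 1)), IsSingularHermitian F q (r + 1) d S₀ ∧
    S.ncard = S₀.ncard ∧
    ∀ H : Submodule F (Fin (r + 1) → F), finrank F H = r →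
      ∃ H₀ : Submodule F (Fin (r + 1) → F), finrank F H₀ = r ∧
        secant F (r + 1) S H = secant F (r + 1) S₀ H₀

/-- `U` is a classical unital (Hermitian curve) of the plane `π` of PG(n-1, q²):
in some coordinatization `e` of `π`, it is the zero set of a non-degenerate
Hermitian form on `F³`. -/
def IsClassicalUnital (F : Type) [Field F] (q n : ℕ)
    (π : Submodule F (Fin n → F)) (U : Set (ProjPoint F n)) : Prop :=
  ∃ e : (Fin 3 → F) →ₗ[F] (Fin n → F), LinearMap.ker e = ⊥ ∧ LinearMap.range e = π ∧
    ∃ A : Matrix (Fin 3) (Fin 3) F, IsUnit A.det ∧ Aᵀ = A.map (fun a => a ^ q) ∧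
      U = {P | ∃ y : Fin 3 → F, y ≠ 0 ∧ P.1 = Submodule.span F {e y} ∧
        ∑ i, ∑ j, y i * A i j * (y j) ^ q = 0}

/-!
Let `c` be a code word, `Z` a point of the plane off its support, and parametrize the lines `ℓ_y`
through `Z` other than one of them by `y`, and the points of `ℓ_y` other than `Z` by `x`. The power
moments `∑ x, c(x, y) x ^ j` are polynomials in `y` of degree at most `j`: it suffices to check this
when `c` is a hyperplane. If `ℓ_y₀` meets the support in `s` points, then the `s × s` Hankel
determinant of these moments is nonzero at `y₀`, has degree at most `s (s - 1)`, and vanishes at `y`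
to order at least `s - |ℓ_y ∩ supp c|`. Comparing degrees gives `s (q² + 1) + t ≤ |supp c| + s²`,
where `t` counts the points of the support on the omitted line.

Averaging over the planes through a line yields one with few points of `V`, where this bound shows
that the line meets `V` in at most `q + 1` or in at least `q² - q - 1` points. Applied to `V ∩ π`,
or to the difference of `V ∩ π` and a given long line, the bound forces every point of `V ∩ π` onto
a line of the second kind. Subtracting all these long lines from the characteristic vector of
`V ∩ π` leaves a word whose support is covered by few lines with few points on each, and by the
bound such a word is zero. Finally the number of long lines is `1` modulo `p`, and counting
points bounds it by `q + 1`.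
-/

section PolynomialMatrices

open Polynomial

variable {R K m ι : Type*} [CommRing R] [Field K] [Fintype m] [DecidableEq m]

theorem exists_det_eq_one_mul_mul_eq_diagonal (A : Matrix m m K) :
    ∃ (U V : Matrix m m K) (D : m → K), U.det = 1 ∧ V.det = 1 ∧ U * A * V = diagonal D := by
  obtain ⟨L, L', D, hD⟩ := Pivot.exists_list_transvec_mul_mul_list_transvec_eq_diagonal A
  exact ⟨_, _, D, TransvectionStruct.det_toMatrix_prod L, TransvectionStruct.det_toMatrix_prod L',
    hD⟩

theorem pow_card_dvd_det_of_dvd_col (a : R) (A : Matrix m m R) (t : Finset m)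
    (h : ∀ i, ∀ k ∈ t, a ∣ A i k) : a ^ t.card ∣ A.det := by
  choose B hB using h
  have hA : A = of fun i k =>
      (if k ∈ t then a else 1) * of (fun i k => if hk : k ∈ t then B i k hk else A i k) i k := by
    ext i k
    by_cases hk : k ∈ t
    · simpa [hk] using hB i k hk
    · simp [hk]
  rw [hA, det_mul_row, Finset.prod_ite_mem, Finset.univ_inter, Finset.prod_const]
  exact dvd_mul_right _ _

theorem X_sub_C_pow_dvd_det (A : Matrix m m K[X]) (y : K) :
    (X - C y) ^ (Fintype.card m - (A.map (eval y)).rank) ∣ A.det := by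
  classical
  obtain ⟨U, V, D, hU, hV, hD⟩ := exists_det_eq_one_mul_mul_eq_diagonal (A.map (eval y))
  have hrank : (A.map (eval y)).rank = Fintype.card {i // D i ≠ 0} := by
    rw [← rank_diagonal, ← hD, rank_mul_eq_left_of_isUnit_det _ _ (by simp [hV]),
      rank_mul_eq_right_of_isUnit_det _ _ (by simp [hU])]
  have hdet : (U.map C * A * V.map C).det = A.det := by
    have hC (N : Matrix m m K) : (N.map C).det = C N.det := (RingHom.map_det C N).symm
    simp [det_mul, hC, hU, hV]
  have heval : (U.map C * A * V.map C).map (eval y) = diagonal D := by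
    have hUy : (U.map C).map (eval y) = U := by ext; simp
    have hVy : (V.map C).map (eval y) = V := by ext; simp
    rw [← coe_evalRingHom, Matrix.map_mul, Matrix.map_mul, coe_evalRingHom, hUy, hVy, hD]
  have hcol : ∀ i, ∀ k ∈ Finset.univ.filter (D · = 0),
      X - C y ∣ (U.map C * A * V.map C) i k := by
    intro i k hk
    have hik : eval y ((U.map C * A * V.map C) i k) = diagonal D i k := congr_fun₂ heval i k
    rw [dvd_iff_isRoot, IsRoot, hik]
    rcases eq_or_ne i k with rfl | hne
    · simpa using hk
    · exact diagonal_apply_ne _ hne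
  have hcard : Fintype.card m - (A.map (eval y)).rank = (Finset.univ.filter (D · = 0)).card := by
    rw [hrank, ← Fintype.card_subtype_compl, Fintype.card_subtype]
    simp
  rw [hcard, ← hdet]
  exact pow_card_dvd_det_of_dvd_col _ _ _ hcol

theorem sum_card_sub_rank_le_natDegree_det (A : Matrix m m K[X]) (hA : A.det ≠ 0) (Y : Finset K) :
    ∑ y ∈ Y, (Fintype.card m - (A.map (eval y)).rank) ≤ A.det.natDegree := by
  have hdvd : ∏ y ∈ Y, (X - C y) ^ (Fintype.card m - (A.map (eval y)).rank) ∣ A.det := by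
    refine Finset.prod_dvd_of_coprime ?_ fun y _ => X_sub_C_pow_dvd_det A y
    intro a _ b _ hab
    exact (isCoprime_X_sub_C_of_isUnit_sub (sub_ne_zero.2 hab).isUnit).pow
  have hdeg := natDegree_le_of_dvd hdvd hA
  rw [natDegree_prod_of_monic _ _ fun y _ => (monic_X_sub_C y).pow _] at hdeg
  simpa using hdeg

/-- The `s × s` Hankel matrix of a sequence. The Hankel matrix of the power moments
`∑ x, a x * v x ^ j` of a weight `a` detects the size of the support of `a`. -/
def hankel (s : ℕ) (M : ℕ → R) : Matrix (Fin s) (Fin s) R :=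
  of fun i j => M (i + j)

theorem natDegree_det_hankel_le (s : ℕ) (M : ℕ → R[X]) (hM : ∀ j, (M j).natDegree ≤ j) :
    (hankel s M).det.natDegree ≤ s * (s - 1) := by
  rw [det_apply]
  refine natDegree_sum_le_of_forall_le _ _ fun σ _ => ?_
  calc _ ≤ (∏ i, hankel s M (σ i) i).natDegree := natDegree_smul_le _ _
    _ ≤ ∑ i, (hankel s M (σ i) i).natDegree := natDegree_prod_le _ _
    _ ≤ ∑ i : Fin s, ((σ i : ℕ) + i) := Finset.sum_le_sum fun i _ => hM _
    _ = (∑ i : Fin s, (i : ℕ)) * 2 := by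
      rw [Finset.sum_add_distrib, Equiv.sum_comp σ (fun i : Fin s => (i : ℕ)), mul_two]
    _ = s * (s - 1) := by
      rw [Fin.sum_univ_eq_sum_range (fun i => i) s, Finset.sum_range_id_mul_two]

variable [Fintype ι]

theorem hankel_moments_eq_mul [DecidableEq ι] (s : ℕ) (a v : ι → R) :
    hankel s (fun j => ∑ x, a x * v x ^ j) =
      (rectVandermonde v 1 s)ᵀ * diagonal a * rectVandermonde v 1 s := by
  ext i j
  rw [mul_apply]
  simp only [hankel, of_apply, mul_diagonal, transpose_apply, rectVandermonde_apply, pow_add,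
    Pi.one_apply, one_pow, mul_one]
  exact Finset.sum_congr rfl fun x _ => by ring

theorem rank_hankel_moments_le (s : ℕ) (a v : ι → K) :
    (hankel s fun j => ∑ x, a x * v x ^ j).rank ≤ (Function.support a).ncard := by
  classical
  rw [hankel_moments_eq_mul]
  calc _ ≤ ((rectVandermonde v 1 s)ᵀ * diagonal a).rank := rank_mul_le_left _ _
    _ ≤ (diagonal a).rank := rank_mul_le_right _ _
    _ = (Function.support a).ncard := by
      rw [rank_diagonal, ← Nat.card_eq_fintype_card]; rfl

theorem det_hankel_moments_ne_zero (a v : ι → K) (hv : Function.Injective v) :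
    (hankel (Function.support a).ncard fun j => ∑ x, a x * v x ^ j).det ≠ 0 := by
  classical
  let e : Fin (Function.support a).ncard ≃ Function.support a :=
    (Finite.equivFinOfCardEq (Nat.card_coe_set_eq _)).symm
  have hsum (j : ℕ) : ∑ x, a x * v x ^ j = ∑ t, a (e t) * v (e t) ^ j := by
    rw [e.sum_comp (fun x : Function.support a => a x * v x ^ j),
      Finset.sum_set_coe (f := fun x => a x * v x ^ j)]
    refine (Finset.sum_subset (Finset.subset_univ _) fun x _ hx => ?_).symm
    simp only [Set.mem_toFinset, Function.mem_support, not_not] at hx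
    rw [hx, zero_mul]
  have hdet : (vandermonde fun t => v (e t)).det ≠ 0 :=
    det_vandermonde_ne_zero_iff.2 (hv.comp (Subtype.val_injective.comp e.injective))
  have hprod : ∏ t, a (e t) ≠ 0 := Finset.prod_ne_zero_iff.2 fun t _ => (e t).2
  simp only [hsum]
  rw [hankel_moments_eq_mul, ← projVandermonde, ← vandermonde_eq_projVandermonde, det_mul,
    det_mul, det_transpose, det_diagonal]
  exact mul_ne_zero (mul_ne_zero hdet hprod) hdet

theorem sum_ncard_support_sub_le (v : ι → K) (hv : Function.Injective v) (g : K → ι → K)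
    (M : ℕ → K[X]) (hdeg : ∀ j, (M j).natDegree ≤ j)
    (hM : ∀ j y, (M j).eval y = ∑ x, g y x * v x ^ j) (Y : Finset K) (y₀ : K) :
    ∑ y ∈ Y, ((Function.support (g y₀)).ncard - (Function.support (g y)).ncard) ≤
      (Function.support (g y₀)).ncard * ((Function.support (g y₀)).ncard - 1) := by
  set s := (Function.support (g y₀)).ncard with hs
  have heval (y : K) : (hankel s M).map (eval y) = hankel s fun j => ∑ x, g y x * v x ^ j := by
    ext i j
    exact hM _ y
  have hdet : (hankel s M).det ≠ 0 := by
    intro h0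
    apply det_hankel_moments_ne_zero (g y₀) v hv
    rw [← hs, ← heval, ← coe_evalRingHom]
    exact (RingHom.map_det (evalRingHom y₀) (hankel s M)).symm.trans (by simp [h0])
  calc _ ≤ ∑ y ∈ Y, (Fintype.card (Fin s) - ((hankel s M).map (eval y)).rank) := by
        refine Finset.sum_le_sum fun y _ => ?_
        rw [heval, Fintype.card_fin]
        exact Nat.sub_le_sub_left (rank_hankel_moments_le s (g y) v) s
    _ ≤ (hankel s M).det.natDegree := sum_card_sub_rank_le_natDegree_det _ hdet Y
    _ ≤ s * (s - 1) := natDegree_det_hankel_le s M hdeg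

end PolynomialMatrices

section Incidence

open Configuration Configuration.ProjectivePlane

variable {P L R : Type*} [Membership P L]

/-- The number of points of `A` on the line `l`. -/
noncomputable def lineSecant (A : Set P) (l : L) : ℕ :=
  (A ∩ {x | x ∈ l}).ncard

/-- The pencil of lines through `Z`. -/
noncomputable def linesThrough (L : Type*) [Membership P L] [Finite L] (Z : P) : Finset L :=
  (Set.toFinite {l : L | Z ∈ l}).toFinset

/-- The points of `l` on no further line of `T`. On these, a sum of the lines of `T` takes the
value one. -/
def solePoints (T : Finset L) (l : L) : Set P :=
  {x | x ∈ l ∧ ∀ m ∈ T, x ∈ m → m = l}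

@[simp]
theorem mem_linesThrough [Finite L] {Z : P} {l : L} : l ∈ linesThrough L Z ↔ Z ∈ l := by
  simp [linesThrough]

theorem support_indicator_sub_indicator [Ring R] [Nontrivial R] (A B : Set P) :
    Function.support (A.indicator (1 : P → R) - B.indicator 1) = symmDiff A B := by
  ext x
  by_cases hA : x ∈ A <;> by_cases hB : x ∈ B <;> simp [Set.mem_symmDiff, hA, hB]

theorem sum_indicator_apply_of_mem_solePoints [Semiring R] {T : Finset L} {l : L} (hl : l ∈ T)
    {x : P} (hx : x ∈ solePoints T l) : (∑ m ∈ T, {y | y ∈ m}.indicator (1 : P → R)) x = 1 := by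
  rw [Finset.sum_apply, Finset.sum_eq_single_of_mem l hl]
  · exact Set.indicator_of_mem (s := {y | y ∈ l}) hx.1 1
  · intro m hm hne
    exact Set.indicator_of_notMem (s := {y | y ∈ m}) (fun hxm => hne (hx.2 m hm hxm)) 1

theorem sum_indicator_apply_of_forall_notMem [Semiring R] {T : Finset L} {x : P}
    (hx : ∀ l ∈ T, x ∉ l) : (∑ m ∈ T, {y | y ∈ m}.indicator (1 : P → R)) x = 0 := by
  rw [Finset.sum_apply]
  exact Finset.sum_eq_zero fun l hl => Set.indicator_of_notMem (s := {y | y ∈ l}) (hx l hl) 1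

theorem pairwiseDisjoint_solePoints (T : Finset L) :
    (T : Set L).PairwiseDisjoint (solePoints (P := P) T) := by
  intro l hl m _ hlm
  exact Set.disjoint_left.2 fun x hxl hxm => hlm (hxm.2 l hl hxl.1)

theorem sum_ncard_eq_ncard_biUnion {ι α : Type*} [Finite α] (T : Finset ι) {f : ι → Set α}
    (hf : (T : Set ι).PairwiseDisjoint f) : ∑ i ∈ T, (f i).ncard = (⋃ i ∈ T, f i).ncard := by
  have h := T.finite_toSet.ncard_biUnion (fun i _ => (f i).toFinite) hf
  rw [finsum_mem_coe_finset] at h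
  simpa using h.symm

section FinitePoints

variable [Finite P]

theorem sum_indicator_one_eq_ncard [Semiring R] (A B : Set P) :
    ∑ x ∈ B.toFinite.toFinset, A.indicator (1 : P → R) x = ((A ∩ B).ncard : R) := by
  classical
  rw [Finset.sum_indicator_eq_sum_filter, Set.ncard_eq_toFinset_card (A ∩ B)]
  simp only [Pi.one_apply, Finset.sum_const, nsmul_eq_mul, mul_one]
  congr 2
  ext x
  simp [and_comm]

theorem lineSecant_le_lineSecant_sdiff_add (A B : Set P) (l : L) :
    lineSecant A l ≤ lineSecant (A \ B) l + lineSecant B l := by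
  refine (Set.ncard_le_ncard ?_ (Set.toFinite _)).trans (Set.ncard_union_le _ _)
  rintro x ⟨hxA, hxl⟩
  by_cases hxB : x ∈ B
  · exact Or.inr ⟨hxB, hxl⟩
  · exact Or.inl ⟨⟨hxA, hxB⟩, hxl⟩

theorem ncard_le_sum_lineSecant {A : Set P} {T : Finset L} (hA : ∀ x ∈ A, ∃ l ∈ T, x ∈ l) :
    A.ncard ≤ ∑ l ∈ T, lineSecant A l := by
  refine (Set.ncard_le_ncard (t := ⋃ l ∈ T, A ∩ {x | x ∈ l}) ?_ (Set.toFinite _)).trans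
    (Finset.set_ncard_biUnion_le T _)
  intro x hx
  obtain ⟨l, hl, hxl⟩ := hA x hx
  exact Set.mem_biUnion hl ⟨hx, hxl⟩

end FinitePoints

variable [ProjectivePlane P L]

theorem eq_of_mem_of_mem {a b : P} {l m : L} (hab : a ≠ b) (hal : a ∈ l) (hbl : b ∈ l)
    (ham : a ∈ m) (hbm : b ∈ m) : l = m :=
  (Nondegenerate.eq_or_eq hal hbl ham hbm).resolve_left hab

theorem lineSecant_setOf_mem_eq_one {l m : L} (hlm : l ≠ m) :
    lineSecant {x : P | x ∈ l} m = 1 := by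
  obtain ⟨a, hal, ham⟩ : ∃ a : P, a ∈ l ∧ a ∈ m :=
    ⟨HasPoints.mkPoint hlm, HasPoints.mkPoint_ax hlm⟩
  refine Set.ncard_eq_one.2 ⟨a, Set.Subset.antisymm ?_ ?_⟩
  · rintro b ⟨hbl, hbm⟩
    by_contra hba
    exact hlm (eq_of_mem_of_mem hba hbl hal hbm ham)
  · rintro _ rfl
    exact ⟨hal, ham⟩

variable [Finite P]

theorem two_mul_sum_lineSecant_le (S : Set P) (T : Finset L) :
    2 * ∑ l ∈ T, lineSecant S l ≤ 2 * S.ncard + T.card * (T.card - 1) := by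
  classical
  induction T using Finset.induction_on generalizing S with
  | empty => simp
  | insert l T hl ih =>
    have hdiff : (S \ {x | x ∈ l}).ncard + lineSecant S l = S.ncard :=
      (add_comm _ _).trans (Set.ncard_inter_add_ncard_sdiff_eq_ncard S {x | x ∈ l})
    have hsum : ∑ m ∈ T, lineSecant S m ≤ ∑ m ∈ T, lineSecant (S \ {x | x ∈ l}) m + T.card := by
      rw [Finset.card_eq_sum_ones, ← Finset.sum_add_distrib]
      refine Finset.sum_le_sum fun m hm => ?_
      rw [← lineSecant_setOf_mem_eq_one (P := P) (ne_of_mem_of_not_mem hm hl).symm]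
      exact lineSecant_le_lineSecant_sdiff_add S {x | x ∈ l} m
    have hT := ih (S \ {x | x ∈ l})
    have hchoose : T.card * (T.card - 1) + 2 * T.card = (T.card + 1) * T.card := by
      cases T.card <;> simp; ring
    rw [Finset.sum_insert hl, Finset.card_insert_of_notMem hl, Nat.add_sub_cancel]
    omega

theorem lineSecant_symmDiff_le (S : Set P) {l m : L} (hlm : l ≠ m) :
    lineSecant (symmDiff S {x | x ∈ l}) m ≤ lineSecant S m + 1 := by
  rw [← lineSecant_setOf_mem_eq_one (P := P) hlm]
  refine (Set.ncard_le_ncard ?_ (Set.toFinite _)).trans (Set.ncard_union_le _ _)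
  rw [← Set.union_inter_distrib_right]
  exact Set.inter_subset_inter_left _ Set.symmDiff_subset_union

theorem ncard_sdiff_solePoints_lt {T : Finset L} {l : L} (hl : l ∈ T) :
    ({x : P | x ∈ l} \ solePoints T l).ncard < T.card := by
  classical
  have hcover : ∀ x ∈ {x : P | x ∈ l} \ solePoints T l, ∃ m ∈ T.erase l, x ∈ m := by
    rintro x ⟨hxl, hx⟩
    by_contra! h
    exact hx ⟨hxl, fun m hm hxm => by_contra fun hne => h m (Finset.mem_erase.2 ⟨hne, hm⟩) hxm⟩
  have hone : ∀ m ∈ T.erase l, lineSecant ({x : P | x ∈ l} \ solePoints T l) m ≤ 1 := by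
    intro m hm
    rw [← lineSecant_setOf_mem_eq_one (P := P) (Finset.ne_of_mem_erase hm).symm]
    exact Set.ncard_le_ncard (Set.inter_subset_inter_left _ Set.sdiff_subset) (Set.toFinite _)
  have hle := (ncard_le_sum_lineSecant hcover).trans (Finset.sum_le_card_nsmul _ _ 1 hone)
  rw [smul_eq_mul, mul_one] at hle
  exact hle.trans_lt (Finset.card_erase_lt_of_mem hl)

variable [Finite L]

theorem ncard_setOf_mem (l : L) : {x : P | x ∈ l}.ncard = order P L + 1 := by
  rw [← pointCount_eq P l]
  rfl

theorem card_linesThrough (Z : P) : (linesThrough L Z).card = order P L + 1 := by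
  rw [← lineCount_eq L Z, linesThrough, ← Set.ncard_eq_toFinset_card]
  rfl

theorem ncard_sdiff_add_lineSecant (S : Set P) (l : L) :
    ({x | x ∈ l} \ S).ncard + lineSecant S l = order P L + 1 := by
  rw [add_comm, lineSecant, Set.inter_comm, ← ncard_setOf_mem (P := P) l]
  exact Set.ncard_inter_add_ncard_sdiff_eq_ncard _ _

theorem ncard_symmDiff_add (S : Set P) (l : L) :
    (symmDiff S {x | x ∈ l}).ncard + 2 * lineSecant S l = S.ncard + (order P L + 1) := by
  have hS : lineSecant S l + (S \ {x | x ∈ l}).ncard = S.ncard :=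
    Set.ncard_inter_add_ncard_sdiff_eq_ncard _ _
  have hl := ncard_sdiff_add_lineSecant S l
  rw [Set.symmDiff_def, Set.ncard_union_eq disjoint_sdiff_sdiff (Set.toFinite _) (Set.toFinite _)]
  omega

theorem exists_line_ne (Z : P) (l : L) : ∃ m : L, Z ∈ m ∧ l ≠ m := by
  have hcard := card_linesThrough (L := L) Z
  have hone := one_lt_order P L
  obtain ⟨m, hm, hne⟩ := Finset.exists_mem_ne (s := linesThrough L Z) (by omega) l
  exact ⟨m, mem_linesThrough.1 hm, hne.symm⟩

theorem exists_mem_notMem_of_lineSecant_le {A : Set P} {l : L} (h : lineSecant A l ≤ order P L) :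
    ∃ Z : P, Z ∈ l ∧ Z ∉ A := by
  have hcard := ncard_sdiff_add_lineSecant A l
  exact Set.nonempty_of_ncard_ne_zero (s := {x | x ∈ l} \ A) (by omega)

theorem exists_forall_notMem {T : Finset L} (hT : T.card ≤ order P L) :
    ∃ Z : P, ∀ l ∈ T, Z ∉ l := by
  have := Fintype.ofFinite P
  by_contra! hcover
  have hcard : (Set.univ : Set P).ncard ≤ ∑ l ∈ T, lineSecant Set.univ l :=
    ncard_le_sum_lineSecant fun Z _ => hcover Z
  simp only [lineSecant, Set.univ_inter, ncard_setOf_mem, Finset.sum_const, smul_eq_mul,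
    Set.ncard_univ, Nat.card_eq_fintype_card, card_points P L] at hcard
  nlinarith

theorem sum_lineSecant_linesThrough {A : Set P} {Z : P} (hZ : Z ∉ A) :
    ∑ l ∈ linesThrough L Z, lineSecant A l = A.ncard := by
  have hne {x : P} (hx : x ∈ A) : Z ≠ x := fun h => hZ (h ▸ hx)
  have hdisj : (linesThrough L Z : Set L).PairwiseDisjoint fun l => A ∩ {x | x ∈ l} := by
    intro l hl m hm hlm
    refine Set.disjoint_left.2 fun x hxl hxm => hlm ?_
    exact eq_of_mem_of_mem (hne hxl.1) (mem_linesThrough.1 hl) hxl.2 (mem_linesThrough.1 hm) hxm.2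
  refine (sum_ncard_eq_ncard_biUnion _ hdisj).trans (congrArg Set.ncard ?_)
  refine Set.Subset.antisymm (Set.iUnion₂_subset fun l _ => Set.inter_subset_left) fun x hx => ?_
  obtain ⟨hZl, hxl⟩ := HasLines.mkLine_ax (L := L) (hne hx)
  exact Set.mem_biUnion (mem_linesThrough.2 hZl) ⟨hx, hxl⟩

theorem sum_lineSecant_linesThrough_of_mem {A : Set P} {Z : P} (hZ : Z ∈ A) :
    ∑ l ∈ linesThrough L Z, lineSecant A l = A.ncard + order P L := by
  have hsucc : ∀ l ∈ linesThrough L Z, lineSecant A l = lineSecant (A \ {Z}) l + 1 := by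
    intro l hl
    have hZl : Z ∈ A ∩ {x | x ∈ l} := ⟨hZ, (mem_linesThrough (L := L)).1 hl⟩
    rw [lineSecant, ← Set.ncard_sdiff_singleton_add_one hZl, lineSecant,
      ← Set.inter_sdiff_right_comm]
  rw [Finset.sum_congr rfl hsucc, Finset.sum_add_distrib, sum_lineSecant_linesThrough (by simp),
    Finset.sum_const, card_linesThrough, smul_eq_mul, mul_one,
    ← Set.ncard_sdiff_singleton_add_one hZ]
  ring

theorem ncard_le_lineSecant_add {A : Set P} {Z : P} {l : L} {b : ℕ} (hZ : Z ∉ A) (hZl : Z ∈ l)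
    (hb : ∀ m : L, Z ∈ m → l ≠ m → lineSecant A m ≤ b) :
    A.ncard ≤ lineSecant A l + order P L * b := by
  classical
  have hle : ∀ m ∈ (linesThrough L Z).erase l, lineSecant A m ≤ b := by
    intro m hm
    rw [Finset.mem_erase, mem_linesThrough] at hm
    exact hb m hm.2 hm.1.symm
  rw [← sum_lineSecant_linesThrough (L := L) hZ,
    ← Finset.add_sum_erase _ _ (mem_linesThrough.2 hZl)]
  gcongr
  refine (Finset.sum_le_card_nsmul _ _ b hle).trans_eq ?_
  rw [Finset.card_erase_of_mem (mem_linesThrough.2 hZl), card_linesThrough, Nat.add_sub_cancel,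
    smul_eq_mul]

theorem ncard_le_of_covered {S : Set P} {T : Finset L} {s : ℕ} (hT : T.card ≤ order P L)
    (hcover : ∀ x ∈ S, ∃ l ∈ T, x ∈ l) (hs : ∀ l ∉ T, lineSecant S l ≤ s) :
    S.ncard ≤ (order P L + 1) * s := by
  obtain ⟨Z, hZ⟩ := exists_forall_notMem (P := P) hT
  have hZS : Z ∉ S := fun h => let ⟨l, hl, hZl⟩ := hcover Z h; hZ l hl hZl
  rw [← sum_lineSecant_linesThrough (L := L) hZS, ← card_linesThrough (L := L) Z]
  exact Finset.sum_le_card_nsmul _ _ s fun l hl =>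
    hs l fun hlT => hZ l hlT (mem_linesThrough.1 hl)

theorem card_mul_le_of_indicator_eq_sum [Semiring R] [Nontrivial R] {S : Set P} {T : Finset L}
    (hS : S.indicator (1 : P → R) = ∑ l ∈ T, {x | x ∈ l}.indicator 1) :
    T.card * (order P L + 2) ≤ S.ncard + T.card ^ 2 := by
  have hsub : ⋃ l ∈ T, solePoints T l ⊆ S := by
    refine Set.iUnion₂_subset fun l hl x hx => ?_
    by_contra hxS
    have hx1 := congrFun hS x
    rw [sum_indicator_apply_of_mem_solePoints hl hx, Set.indicator_of_notMem hxS] at hx1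
    exact zero_ne_one hx1
  have hsole : ∀ l ∈ T, order P L + 2 ≤ (solePoints (P := P) T l).ncard + T.card := by
    intro l hl
    have hadd : (solePoints T l).ncard + ({x : P | x ∈ l} \ solePoints T l).ncard =
        order P L + 1 := by
      rw [← ncard_setOf_mem (P := P) l, add_comm]
      exact Set.ncard_sdiff_add_ncard_of_subset fun x hx => hx.1
    have hlt := ncard_sdiff_solePoints_lt (P := P) hl
    omega
  have hsum := Finset.card_nsmul_le_sum _ _ _ hsole
  rw [Finset.sum_add_distrib, sum_ncard_eq_ncard_biUnion T (pairwiseDisjoint_solePoints T),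
    Finset.sum_const, smul_eq_mul, smul_eq_mul, ← sq] at hsum
  exact hsum.trans (Nat.add_le_add_right (Set.ncard_le_ncard hsub (Set.toFinite _)) _)

theorem card_eq_lineSecant_of_indicator_eq_sum [CommRing R] (hn : (order P L : R) = 0) {S : Set P}
    {T : Finset L} (hS : S.indicator (1 : P → R) = ∑ l ∈ T, {x | x ∈ l}.indicator 1) (m : L) :
    (T.card : R) = lineSecant S m := by
  have hone : ∀ l ∈ T, (lineSecant {x : P | x ∈ l} m : R) = 1 := by
    intro l _
    rcases eq_or_ne l m with rfl | hlm
    · rw [lineSecant, Set.inter_self, ncard_setOf_mem, Nat.cast_add, hn, Nat.cast_one, zero_add]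
    · rw [lineSecant_setOf_mem_eq_one hlm, Nat.cast_one]
  have hsum := sum_indicator_one_eq_ncard (R := R) S {x | x ∈ m}
  simp only [hS, Finset.sum_apply] at hsum
  rw [Finset.sum_comm] at hsum
  simp only [sum_indicator_one_eq_ncard] at hsum
  rw [lineSecant, ← hsum, Finset.card_eq_sum_ones, Nat.cast_sum, Nat.cast_one]
  exact Finset.sum_congr rfl fun l hl => (hone l hl).symm

end Incidence

section SecantBound

open Configuration Configuration.ProjectivePlane

variable {P L R : Type*} [Membership P L]

/-- The lines meeting `S` in more than `q + 1` points. -/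
noncomputable def longLines (L : Type*) [Membership P L] [Finite L] (q : ℕ) (S : Set P) :
    Finset L :=
  (Set.toFinite {l : L | q + 1 < lineSecant S l}).toFinset

@[simp]
theorem mem_longLines [Finite L] {q : ℕ} {S : Set P} {l : L} :
    l ∈ longLines L q S ↔ q + 1 < lineSecant S l := by
  simp [longLines]

variable [ProjectivePlane P L]

/-- The Szőnyi–Weiner type bound satisfied by the supports of code words: a line `l` meeting
`A` in `s` points, and not contained in `A`, satisfies `s * (n + 1) + t ≤ |A| + s ^ 2` for every
other line, meeting `A` in `t` points, through a point of `l` off `A`. -/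
def HasSecantBound (L : Type*) [Membership P L] [ProjectivePlane P L] (A : Set P) : Prop :=
  ∀ Z ∉ A, ∀ l m : L, Z ∈ l → Z ∈ m → l ≠ m →
    lineSecant A l * (order P L + 1) + lineSecant A m ≤ A.ncard + lineSecant A l ^ 2

variable [Finite P]

theorem card_le_two_mul_of_le_lineSecant_add {S : Set P} {T : Finset L} {q e : ℕ} (hq : 4 < q)
    (he : e ≤ q + 1) (heq : 4 * q + e < q ^ 2) (hcard : S.ncard ≤ q ^ 3 + 2 * q ^ 2)
    (hT : ∀ l ∈ T, q ^ 2 ≤ lineSecant S l + e) : T.card ≤ 2 * q := by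
  by_contra! hlt
  obtain ⟨U, hUT, hU⟩ := Finset.exists_subset_card_eq (show 2 * q + 1 ≤ T.card by omega)
  have hupper := two_mul_sum_lineSecant_le S U
  have hlower := Finset.card_nsmul_le_sum U _ _ fun l hl => hT l (hUT hl)
  rw [Finset.sum_add_distrib, Finset.sum_const, hU, smul_eq_mul, smul_eq_mul] at hlower
  rw [hU, Nat.add_sub_cancel] at hupper
  have hcubic : 3 * q ^ 2 + q + (2 * q + 1) * e < q ^ 3 := by
    obtain rfl | hq6 : q = 5 ∨ 6 ≤ q := by omega
    · omega
    · nlinarith [Nat.mul_le_mul_left (2 * q + 1) he]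
  nlinarith

variable [Finite L]

theorem HasSecantBound.exists_line_of_mem {A : Set P} (hA : HasSecantBound L A) {x : P}
    (hx : x ∈ A) (hle : ∀ l : L, x ∈ l → lineSecant A l ≤ order P L) :
    ∃ l : L, ∃ Z : P, x ∈ l ∧ Z ∈ l ∧ Z ∉ A ∧ ∀ m : L, Z ∈ m → l ≠ m →
      order P L + lineSecant A m ≤ lineSecant A l ^ 2 := by
  have hne : (linesThrough L x).Nonempty :=
    Finset.card_pos.1 (by rw [card_linesThrough]; omega)
  obtain ⟨l, hl, hmax⟩ := (linesThrough L x).exists_max_image (lineSecant A) hne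
  have hsum := Finset.sum_le_card_nsmul _ _ _ hmax
  rw [sum_lineSecant_linesThrough_of_mem hx, card_linesThrough, smul_eq_mul] at hsum
  rw [mem_linesThrough] at hl
  obtain ⟨Z, hZl, hZ⟩ := exists_mem_notMem_of_lineSecant_le (hle l hl)
  refine ⟨l, Z, hl, hZl, hZ, fun m hZm hlm => ?_⟩
  have hbound := hA Z hZ l m hZl hZm hlm
  nlinarith

theorem HasSecantBound.exists_long_line_of_ncard_le {S : Set P} {q : ℕ} (hS : HasSecantBound L S)
    (hn : order P L = q ^ 2) (hq : 2 < q) (hpos : ∀ l : L, lineSecant S l ≠ 0)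
    (hneq : ∀ l : L, lineSecant S l ≠ q) (hcard : S.ncard ≤ q ^ 3) {x : P} (hx : x ∈ S) :
    ∃ l : L, x ∈ l ∧ q + 1 < lineSecant S l := by
  by_contra! hshort
  obtain ⟨l, Z, hxl, hZl, hZ, hsq⟩ :=
    hS.exists_line_of_mem hx fun l hl => (hshort l hl).trans (by rw [hn]; nlinarith)
  have hl : lineSecant S l = q + 1 := by
    obtain ⟨m, hZm, hlm⟩ := exists_line_ne Z l
    have hm := hsq m hZm hlm
    have hm0 := hpos m
    have hlt : q < lineSecant S l := by
      rw [hn] at hm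
      exact lt_of_pow_lt_pow_left₀ 2 (Nat.zero_le _) (by omega)
    exact le_antisymm (hshort l hxl) hlt
  have hbound (m : L) (hZm : Z ∈ m) (hlm : l ≠ m) :
      (q + 1) * (q ^ 2 + 1) + lineSecant S m ≤ S.ncard + (q + 1) ^ 2 := by
    simpa only [hl, hn] using hS Z hZ l m hZl hZm hlm
  have hother (m : L) (hZm : Z ∈ m) (hlm : l ≠ m) : lineSecant S m ≤ q - 1 := by
    have hm := hbound m hZm hlm
    have hmq : lineSecant S m ≤ q := by nlinarith
    have hmq' := hneq m
    omega
  have hupper : S.ncard ≤ q + 1 + q ^ 2 * (q - 1) := by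
    simpa only [hl, hn] using ncard_le_lineSecant_add hZ hZl hother
  obtain ⟨m, hZm, hlm⟩ := exists_line_ne Z l
  have hlower := hbound m hZm hlm
  obtain ⟨k, rfl⟩ : ∃ k, q = k + 1 := ⟨q - 1, by omega⟩
  rw [Nat.add_sub_cancel] at hupper
  nlinarith

theorem exists_long_line_of_symmDiff {S : Set P} {q : ℕ} (hn : order P L = q ^ 2) (hq : 4 < q)
    {l₀ : L} (hl₀ : q ^ 2 + 1 ≤ lineSecant S l₀ + q)
    (hA : HasSecantBound L (symmDiff S {x | x ∈ l₀})) {x : P} (hx : x ∈ S) :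
    ∃ l : L, x ∈ l ∧ q + 1 < lineSecant S l := by
  by_contra! hshort
  have hxl₀ : x ∉ l₀ := fun h => by nlinarith [hshort l₀ h]
  set A := symmDiff S {x | x ∈ l₀}
  have hxA : x ∈ A := Or.inl ⟨hx, hxl₀⟩
  have hle (l : L) (hxl : x ∈ l) : lineSecant A l ≤ q + 2 := by
    have hne : l₀ ≠ l := fun h => hxl₀ (h ▸ hxl)
    exact (lineSecant_symmDiff_le S hne).trans (Nat.add_le_add_right (hshort l hxl) 1)
  have hScard : S.ncard + q ^ 2 ≤ (q ^ 2 + 1) * (q + 1) := by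
    rw [← hn, ← sum_lineSecant_linesThrough_of_mem (L := L) hx, ← card_linesThrough (L := L) x]
    exact Finset.sum_le_card_nsmul _ _ _ fun l hl => hshort l (mem_linesThrough.1 hl)
  have hAcard : A.ncard + q ^ 2 ≤ q ^ 3 + 3 * q := by
    have hsymm := ncard_symmDiff_add S l₀
    rw [hn] at hsymm
    nlinarith
  obtain ⟨l, Z, hxl, hZl, hZ, hsq⟩ :=
    hA.exists_line_of_mem hxA fun l hl => (hle l hl).trans (by rw [hn]; nlinarith)
  have hbound (m : L) (hZm : Z ∈ m) (hlm : l ≠ m) :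
      lineSecant A l * (q ^ 2 + 1) ≤ A.ncard + lineSecant A l ^ 2 := by
    simpa only [hn] using (Nat.le_add_right _ _).trans (hA Z hZ l m hZl hZm hlm)
  obtain ⟨m, hZm, hlm⟩ := exists_line_ne Z l
  have hl : lineSecant A l = q := by
    have hupper := hle l hxl
    have hm := hbound m hZm hlm
    have hlower : q ≤ lineSecant A l := by
      have hsqm := hsq m hZm hlm
      rw [hn] at hsqm
      exact le_of_pow_le_pow_left₀ two_ne_zero (Nat.zero_le _) (by omega)
    generalize lineSecant A l = s at *
    obtain rfl | rfl | rfl : s = q ∨ s = q + 1 ∨ s = q + 2 := by omega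
    · rfl
    · nlinarith
    · nlinarith
  have hother (m : L) (hZm : Z ∈ m) (hlm : l ≠ m) : lineSecant A m ≤ 0 := by
    simpa [hl, hn] using hsq m hZm hlm
  have hAq : A.ncard ≤ q := by simpa [hl] using ncard_le_lineSecant_add hZ hZl hother
  have := hbound m hZm hlm
  rw [hl] at this
  nlinarith

theorem HasSecantBound.lineSecant_le_or_le {A : Set P} {q : ℕ} (hA : HasSecantBound L A)
    (hn : order P L = q ^ 2) (hq : 4 < q) (hpos : ∀ l : L, lineSecant A l ≠ 0) {l : L}
    (hcard : A.ncard ≤ q ^ 3 + lineSecant A l) :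
    lineSecant A l ≤ q + 1 ∨ q ^ 2 ≤ lineSecant A l + q + 1 := by
  by_contra! ⟨hlow, hhigh⟩
  obtain ⟨Z, hZl, hZ⟩ := exists_mem_notMem_of_lineSecant_le (A := A) (l := l) (by omega)
  obtain ⟨m, hZm, hlm⟩ := exists_line_ne Z l
  have hbound := hA Z hZ l m hZl hZm hlm
  have hm := Nat.pos_of_ne_zero (hpos m)
  rw [hn] at hbound
  generalize lineSecant A l = s at *
  have hconcave : 0 ≤ ((s : ℤ) - (q + 2)) * (q ^ 2 - (q + 2) - s) := by
    apply mul_nonneg <;> zify at hlow hhigh <;> linarith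
  zify at *
  nlinarith

theorem lineSecant_support_sub_le [CommRing R] {S : Set P} {T : Finset L} {l : L} {e : ℕ}
    (hl : l ∈ T) (hlong : order P L ≤ lineSecant S l + e) :
    lineSecant (Function.support
      (S.indicator (1 : P → R) - ∑ l ∈ T, {x | x ∈ l}.indicator 1)) l ≤ T.card + e := by
  have hsub : Function.support (S.indicator (1 : P → R) - ∑ l ∈ T, {x | x ∈ l}.indicator 1) ∩
      {x | x ∈ l} ⊆ ({x | x ∈ l} \ S) ∪ ({x | x ∈ l} \ solePoints T l) := by
    rintro x ⟨hx, hxl⟩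
    by_contra! hnot
    have hxS : x ∈ S := by_contra fun h => hnot (Or.inl ⟨hxl, h⟩)
    have hxT : x ∈ solePoints T l := by_contra fun h => hnot (Or.inr ⟨hxl, h⟩)
    rw [Function.mem_support, Pi.sub_apply, sum_indicator_apply_of_mem_solePoints hl hxT,
      Set.indicator_of_mem hxS, Pi.one_apply, sub_self] at hx
    exact hx rfl
  have hle := (Set.ncard_le_ncard hsub (Set.toFinite _)).trans (Set.ncard_union_le _ _)
  have hcompl := ncard_sdiff_add_lineSecant S l
  have hsole := ncard_sdiff_solePoints_lt (P := P) hl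
  rw [lineSecant]
  omega

theorem indicator_eq_sum_of_hasSecantBound [CommRing R] {S : Set P} {T : Finset L} {e : ℕ}
    (hcover : ∀ x ∈ S, ∃ l ∈ T, x ∈ l) (hlong : ∀ l ∈ T, order P L ≤ lineSecant S l + e)
    (hT : 2 * T.card + e ≤ order P L)
    (hsupp : HasSecantBound L
      (Function.support (S.indicator (1 : P → R) - ∑ l ∈ T, {x | x ∈ l}.indicator 1))) :
    S.indicator (1 : P → R) = ∑ l ∈ T, {x | x ∈ l}.indicator 1 := by
  set A := Function.support (S.indicator (1 : P → R) - ∑ l ∈ T, {x | x ∈ l}.indicator 1)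
  have hcoverA : ∀ x ∈ A, ∃ l ∈ T, x ∈ l := by
    intro x hx
    by_contra! hxT
    refine hx ?_
    rw [Pi.sub_apply, sum_indicator_apply_of_forall_notMem hxT,
      Set.indicator_of_notMem fun hxS => let ⟨l, hl, hxl⟩ := hcover x hxS; hxT l hl hxl, sub_zero]
  suffices A = ∅ from sub_eq_zero.1 (Function.support_eq_empty_iff.1 this)
  rcases T.eq_empty_or_nonempty with rfl | hne
  · exact Set.eq_empty_of_forall_notMem fun x hx => by simpa using hcoverA x hx
  obtain ⟨l, hl, hmax⟩ := T.exists_max_image (lineSecant A) hne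
  have hcard : A.ncard ≤ T.card * lineSecant A l :=
    (ncard_le_sum_lineSecant hcoverA).trans (Finset.sum_le_card_nsmul _ _ _ hmax)
  have hsec : lineSecant A l ≤ T.card + e := lineSecant_support_sub_le hl (hlong l hl)
  obtain ⟨Z, hZl, hZ⟩ := exists_mem_notMem_of_lineSecant_le (hsec.trans (by omega))
  obtain ⟨m, hZm, hlm⟩ := exists_line_ne Z l
  have hbound := hsupp Z hZ l m hZl hZm hlm
  have hzero : lineSecant A l = 0 := by nlinarith
  rw [hzero, mul_zero] at hcard
  exact (Set.ncard_eq_zero (Set.toFinite _)).1 (Nat.le_zero.1 hcard)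

section Arithmetic

variable {p q : ℕ} [Fact p.Prime]

/- The value `e = q + 1` is too large when `q = 5`. For odd `p` the congruence excludes
`s = q² - q - 1` and `s = q² - q`, so that `e = q - 1` will do. -/
theorem exists_deficiency (hpq : p ∣ q) (hq : 4 < q) (hq8 : p = 2 → 8 ≤ q) :
    ∃ e, e ≤ q + 1 ∧ 4 * q + e < q ^ 2 ∧
      ∀ s : ℕ, (s : ZMod p) = 1 → q ^ 2 ≤ s + q + 1 → q ^ 2 ≤ s + e := by
  by_cases hp2 : p = 2
  · have := hq8 hp2
    exact ⟨q + 1, le_rfl, by nlinarith, fun s _ hs => hs⟩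
  refine ⟨q - 1, by omega, by have := Nat.mul_le_mul_right q hq; rw [sq]; omega,
    fun s hs1 hs => ?_⟩
  by_contra! hlt
  have hq0 : (q : ZMod p) = 0 := (ZMod.natCast_eq_zero_iff q p).2 hpq
  have htwo : (2 : ZMod p) ≠ 0 := by
    have h2p : ¬ p ∣ 2 := fun h => hp2 ((Nat.prime_dvd_prime_iff_eq Fact.out Nat.prime_two).1 h)
    exact_mod_cast mt (ZMod.natCast_eq_zero_iff 2 p).1 h2p
  obtain heq | heq : s + q + 1 = q ^ 2 ∨ s + q + 1 = q ^ 2 + 1 := by omega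
  all_goals
    have hcast := congrArg (Nat.cast (R := ZMod p)) heq
    push_cast at hcast
    rw [hs1, hq0] at hcast
  · exact htwo (by linear_combination hcast)
  · exact one_ne_zero (α := ZMod p) (by linear_combination hcast)

theorem le_add_one_of_mul_le {k : ℕ} (hpq : p ∣ q) (hq : 4 < q) (hq8 : p = 2 → 8 ≤ q)
    (hk : (k : ZMod p) = 1) (hk2 : k ≤ 2 * q)
    (hmul : k * (q ^ 2 + 2) ≤ (q ^ 2 + 1) * (q + 1) + k ^ 2) : k ≤ q + 1 := by
  by_contra! hlt
  obtain ⟨j, rfl⟩ : ∃ j, k = q + 2 + j := Nat.exists_eq_add_of_le hlt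
  have hq0 : (q : ZMod p) = 0 := (ZMod.natCast_eq_zero_iff q p).2 hpq
  push_cast at hk
  rw [hq0] at hk
  obtain rfl | rfl | hj : j = 0 ∨ j = 1 ∨ 2 ≤ j := by omega
  · exact one_ne_zero (α := ZMod p) (by linear_combination hk)
  · have htwo : ((2 : ℕ) : ZMod p) = 0 := by push_cast at hk ⊢; linear_combination hk
    have hp2 := (Nat.prime_dvd_prime_iff_eq Fact.out Nat.prime_two).1
      ((ZMod.natCast_eq_zero_iff 2 p).1 htwo)
    nlinarith [hq8 hp2]
  · have hconcave : 0 ≤ ((j : ℤ) - 2) * (q - 2 - j) := by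
      apply mul_nonneg <;> zify at hj hk2 <;> linarith
    zify at *
    have hlinear : 0 ≤ ((j : ℤ) - 2) * (q ^ 2 - 3 * q - 2) :=
      mul_nonneg (by linarith) (by nlinarith)
    nlinarith

end Arithmetic

theorem exists_card_le_indicator_eq_sum {p q : ℕ} [Fact p.Prime] (hpq : p ∣ q) (hq : 4 < q)
    (hq8 : p = 2 → 8 ≤ q) (hn : order P L = q ^ 2) {C : Submodule (ZMod p) (P → ZMod p)}
    (hC : ∀ c ∈ C, HasSecantBound L (Function.support c))
    (hlines : ∀ l : L, {x | x ∈ l}.indicator 1 ∈ C) {S : Set P} (hS : S.indicator 1 ∈ C)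
    (hmod : ∀ l : L, (lineSecant S l : ZMod p) = 1)
    (hdich : ∀ l : L, lineSecant S l ≤ q + 1 ∨ q ^ 2 ≤ lineSecant S l + q + 1)
    (hcard : S.ncard ≤ q ^ 3 + 2 * q ^ 2)
    (hlong : q ^ 3 < S.ncard → ∃ l : L, q ^ 2 + 1 ≤ lineSecant S l + q) :
    ∃ T : Finset L, T.card ≤ q + 1 ∧
      S.indicator (1 : P → ZMod p) = ∑ l ∈ T, {x | x ∈ l}.indicator 1 := by
  have hq0 : (q : ZMod p) = 0 := (ZMod.natCast_eq_zero_iff q p).2 hpq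
  have hcover : ∀ x ∈ S, ∃ l ∈ longLines L q S, x ∈ l := by
    suffices ∀ x ∈ S, ∃ l : L, x ∈ l ∧ q + 1 < lineSecant S l by simpa [and_comm] using this
    intro x hx
    rcases le_or_gt S.ncard (q ^ 3) with hsmall | hbig
    · have hbound : HasSecantBound L S := by
        simpa [Set.support_indicator] using hC _ hS
      exact hbound.exists_long_line_of_ncard_le hn (by omega)
        (fun l hl => by simpa [hl] using hmod l) (fun l hl => by simpa [hl, hq0] using hmod l)
        hsmall hx
    · obtain ⟨l, hl⟩ := hlong hbig
      refine exists_long_line_of_symmDiff hn hq hl ?_ hx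
      rw [← support_indicator_sub_indicator (R := ZMod p)]
      exact hC _ (C.sub_mem hS (hlines l))
  obtain ⟨e, he, heq, hdef⟩ := exists_deficiency hpq hq hq8
  have hdeficiency : ∀ l ∈ longLines L q S, q ^ 2 ≤ lineSecant S l + e := fun l hl =>
    hdef _ (hmod l) ((hdich l).resolve_left (mem_longLines.1 hl).not_ge)
  have htwo := card_le_two_mul_of_le_lineSecant_add hq he heq hcard hdeficiency
  have hsum : S.indicator (1 : P → ZMod p) = ∑ l ∈ longLines L q S, {x | x ∈ l}.indicator 1 :=
    indicator_eq_sum_of_hasSecantBound hcover (hn ▸ hdeficiency) (by rw [hn]; omega)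
      (hC _ (C.sub_mem hS (C.sum_mem fun l _ => hlines l)))
  refine ⟨longLines L q S, le_add_one_of_mul_le hpq hq hq8 ?_ htwo ?_, hsum⟩
  · obtain ⟨_, _, _, l, _⟩ := exists_config (P := P) (L := L)
    exact (card_eq_lineSecant_of_indicator_eq_sum (by simp [hn, hq0]) hsum l).trans (hmod l)
  · have hupper := ncard_le_of_covered (by rw [hn]; nlinarith) hcover
      (fun l hl => not_lt.1 (mt mem_longLines.2 hl))
    have hlower := card_mul_le_of_indicator_eq_sum hsum
    rw [hn] at hupper hlower
    nlinarith

end SecantBound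

section ProjectiveSpace

variable {F : Type} [Field F] {n : ℕ} {W m : Submodule F (Fin n → F)}

/-- The projective point spanned by a nonzero vector. -/
def spanPoint (v : Fin n → F) (hv : v ≠ 0) : ProjPoint F n :=
  ⟨F ∙ v, finrank_span_singleton hv⟩

theorem spanPoint_mem_pointsIn {v : Fin n → F} {hv : v ≠ 0} :
    spanPoint v hv ∈ pointsIn F n W ↔ v ∈ W :=
  Submodule.span_singleton_le_iff_mem v W

theorem exists_spanPoint_eq (P : ProjPoint F n) : ∃ v hv, spanPoint v hv = P := by
  obtain ⟨v, hv, hspan⟩ := finrank_eq_one_iff'.1 P.2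
  refine ⟨v, by simpa using hv, Subtype.ext (le_antisymm ?_ fun w hw => ?_)⟩
  · exact (Submodule.span_singleton_le_iff_mem _ _).2 v.2
  · obtain ⟨a, ha⟩ := hspan ⟨w, hw⟩
    exact Submodule.mem_span_singleton.2 ⟨a, congrArg Subtype.val ha⟩

theorem ProjPoint.eq_of_le {P R : ProjPoint F n} (h : P.1 ≤ R.1) : P = R :=
  Subtype.ext (Submodule.eq_of_le_of_finrank_eq h (P.2.trans R.2.symm))

theorem spanPoint_eq_spanPoint {u v : Fin n → F} {hu : u ≠ 0} {hv : v ≠ 0} :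
    spanPoint u hu = spanPoint v hv ↔ ∃ a : F, a • v = u := by
  rw [← Submodule.mem_span_singleton]
  exact ⟨fun h => spanPoint_mem_pointsIn.1 (congrArg Subtype.val h).le,
    fun h => ProjPoint.eq_of_le (spanPoint_mem_pointsIn.2 h)⟩

theorem exists_notMem_pointsIn (h : finrank F m < finrank F W) :
    ∃ P ∈ pointsIn F n W, P ∉ pointsIn F n m := by
  obtain ⟨v, hvW, hvm⟩ := SetLike.not_le_iff_exists.1 (mt Submodule.finrank_mono h.not_ge)
  have hv : v ≠ 0 := fun hv => hvm (hv ▸ m.zero_mem)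
  exact ⟨spanPoint v hv, spanPoint_mem_pointsIn.2 hvW, mt spanPoint_mem_pointsIn.1 hvm⟩

theorem finrank_sup_point {P : ProjPoint F n} (hP : P ∉ pointsIn F n W) :
    finrank F ↥(W ⊔ P.1) = finrank F W + 1 := by
  have hinf : W ⊓ P.1 = ⊥ := by
    have hlt := Submodule.finrank_lt_finrank_of_lt (inf_lt_right.2 hP)
    rw [P.2, Nat.lt_one_iff] at hlt
    exact Submodule.finrank_eq_zero.1 hlt
  have h := Submodule.finrank_sup_add_finrank_inf_eq W P.1
  rwa [hinf, finrank_bot, P.2, add_zero] at h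

theorem sup_point_eq {P : ProjPoint F n} (hmW : m ≤ W) (hW : finrank F W = finrank F m + 1)
    (hP : P ∈ pointsIn F n W) (hPm : P ∉ pointsIn F n m) : m ⊔ P.1 = W :=
  Submodule.eq_of_le_of_finrank_eq (sup_le hmW hP) (by rw [finrank_sup_point hPm, hW])

theorem mem_pointsIn_sup_comm {P R : ProjPoint F n} (hP : P ∉ pointsIn F n m)
    (hR : R ∉ pointsIn F n m) : R ∈ pointsIn F n (m ⊔ P.1) ↔ P ∈ pointsIn F n (m ⊔ R.1) := by
  have hsymm {P R : ProjPoint F n} (hP : P ∉ pointsIn F n m) (hR : R ∉ pointsIn F n m)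
      (h : R ∈ pointsIn F n (m ⊔ P.1)) : P ∈ pointsIn F n (m ⊔ R.1) := by
    rw [sup_point_eq le_sup_left (finrank_sup_point hP) h hR]
    exact le_sup_right (a := m)
  exact ⟨hsymm hP hR, hsymm hR hP⟩

theorem exists_eq_ker_of_finrank_add_one {H : Submodule F (Fin n → F)} (hH : finrank F H + 1 = n) :
    ∃ φ : Dual F (Fin n → F), H = LinearMap.ker φ := by
  have hlt : H < ⊤ := by
    refine lt_top_iff_ne_top.2 ?_
    rintro rfl
    rw [finrank_top, finrank_fin_fun] at hH
    omega
  obtain ⟨φ, hφ, hle⟩ := Submodule.exists_le_ker_of_lt_top H hlt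
  refine ⟨φ, Submodule.eq_of_le_of_finrank_eq hle ?_⟩
  have hker := Module.Dual.finrank_ker_add_one_of_ne_zero hφ
  rw [finrank_fin_fun] at hker
  omega

theorem exists_hyperplane_inf_eq {l : Submodule F (Fin n → F)} (hlW : l ≤ W)
    (hl : finrank F W = finrank F l + 1) :
    ∃ H : Submodule F (Fin n → F), finrank F H = n - 1 ∧ H ⊓ W = l := by
  obtain ⟨v, hvW, hvl⟩ :=
    SetLike.not_le_iff_exists.1 (mt Submodule.finrank_mono (by omega : ¬ finrank F W ≤ finrank F l))
  obtain ⟨φ, hφ, hle⟩ := Submodule.exists_le_ker_of_notMem hvl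
  refine ⟨LinearMap.ker φ, ?_, ?_⟩
  · have hker := Module.Dual.finrank_ker_add_one_of_ne_zero
      (f := φ) (fun h => hφ (by rw [h, LinearMap.zero_apply]))
    rw [finrank_fin_fun] at hker
    omega
  · have hlt : LinearMap.ker φ ⊓ W < W := inf_lt_right.2 fun h => hφ (h hvW)
    have hfin := Submodule.finrank_lt_finrank_of_lt hlt
    exact (Submodule.eq_of_le_of_finrank_le (le_inf hle hlW) (by omega)).symm

theorem pointsIn_inf (U W : Submodule F (Fin n → F)) :
    pointsIn F n (U ⊓ W) = pointsIn F n U ∩ pointsIn F n W :=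
  Set.ext fun P => show P.1 ≤ U ⊓ W ↔ _ from le_inf_iff

theorem secant_top (A : Set (ProjPoint F n)) : secant F n A ⊤ = A.ncard := by
  rw [secant, Set.inter_eq_left.2 fun P _ => show P.1 ≤ ⊤ from le_top]

variable [Finite F]

instance : Finite (ProjPoint F n) :=
  Subtype.finite

theorem ncard_pointsIn (W : Submodule F (Fin n → F)) :
    (pointsIn F n W).ncard = ∑ i ∈ Finset.range (finrank F W), Nat.card F ^ i := by
  let f (x : Projectivization F W) : ProjPoint F n :=
    ⟨x.submodule.map W.subtype, (Submodule.finrank_map_subtype_eq W _).trans x.finrank_submodule⟩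
  have hf : Function.Injective f := fun x y hxy =>
    Projectivization.submodule_injective
      (Submodule.map_injective_of_injective W.subtype_injective (congrArg Subtype.val hxy))
  have hrange : Set.range f = pointsIn F n W := by
    ext P
    constructor
    · rintro ⟨x, rfl⟩
      exact Submodule.map_subtype_le W _
    · intro hP
      obtain ⟨v, hv, rfl⟩ := exists_spanPoint_eq P
      have hvW : v ∈ W := spanPoint_mem_pointsIn.1 hP
      refine ⟨Projectivization.mk F ⟨v, hvW⟩ (by simpa using hv), Subtype.ext ?_⟩
      simp [f, spanPoint, Projectivization.submodule_mk, Submodule.map_span]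
  rw [← hrange, ← Nat.card_coe_set_eq, Nat.card_range_of_injective hf,
    Projectivization.card_of_finrank F W rfl]

theorem natCast_ncard_pointsIn {R : Type*} [Semiring R] (hF : (Nat.card F : R) = 0)
    (hW : finrank F W ≠ 0) : ((pointsIn F n W).ncard : R) = 1 := by
  rw [ncard_pointsIn]
  push_cast
  rw [hF, zero_geom_sum, if_neg hW]

theorem ncard_pointsIn_sdiff_pointsIn (hmW : m ≤ W) (hW : finrank F W = finrank F m + 1) :
    (pointsIn F n W \ pointsIn F n m).ncard = Nat.card F ^ finrank F m := by
  have hsub : pointsIn F n m ⊆ pointsIn F n W := fun P hP => le_trans hP hmW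
  have h := Set.ncard_sdiff_add_ncard_of_subset hsub
  rw [ncard_pointsIn, ncard_pointsIn, hW, Finset.sum_range_succ] at h
  omega

theorem secant_sdiff_add_secant (A : Set (ProjPoint F n)) (hmW : m ≤ W) :
    secant F n (A \ pointsIn F n m) W + secant F n A m = secant F n A W := by
  have hsub : A ∩ pointsIn F n m ⊆ A ∩ pointsIn F n W := fun P hP => ⟨hP.1, le_trans hP.2 hmW⟩
  rw [secant, secant, secant, ← Set.ncard_sdiff_add_ncard_of_subset hsub]
  congr 2
  ext P
  simp only [Set.mem_inter_iff, Set.mem_sdiff]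
  tauto

theorem sum_secant_sup_point (m : Submodule F (Fin n → F)) {B : Set (ProjPoint F n)}
    (hB : Disjoint B (pointsIn F n m)) :
    ∑ P ∈ (pointsIn F n m)ᶜ.toFinite.toFinset, secant F n B (m ⊔ P.1) =
      B.ncard * Nat.card F ^ finrank F m := by
  classical
  have hcount := Finset.sum_card_bipartiteAbove_eq_sum_card_bipartiteBelow
    (s := (pointsIn F n m)ᶜ.toFinite.toFinset) (t := B.toFinite.toFinset)
    (fun P R => R ∈ pointsIn F n (m ⊔ P.1))
  have habove : ∀ P ∈ (pointsIn F n m)ᶜ.toFinite.toFinset,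
      ((B.toFinite.toFinset).bipartiteAbove (fun P R => R ∈ pointsIn F n (m ⊔ P.1)) P).card =
        secant F n B (m ⊔ P.1) := by
    intro P _
    rw [secant, Set.ncard_eq_toFinset_card (B ∩ pointsIn F n (m ⊔ P.1))]
    congr 1
    ext R
    simp [Finset.mem_bipartiteAbove]
  have hbelow : ∀ R ∈ B.toFinite.toFinset,
      ((pointsIn F n m)ᶜ.toFinite.toFinset.bipartiteBelow
        (fun P R => R ∈ pointsIn F n (m ⊔ P.1)) R).card = Nat.card F ^ finrank F m := by
    intro R hR
    have hRm : R ∉ pointsIn F n m := Set.disjoint_left.1 hB (by simpa using hR)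
    rw [← ncard_pointsIn_sdiff_pointsIn le_sup_left (finrank_sup_point hRm),
      Set.ncard_eq_toFinset_card (pointsIn F n (m ⊔ R.1) \ pointsIn F n m)]
    congr 1
    ext P
    simp only [Finset.mem_bipartiteBelow, Set.Finite.mem_toFinset, Set.mem_compl_iff,
      Set.mem_sdiff]
    rw [and_comm]
    exact and_congr_left fun hPm => mem_pointsIn_sup_comm hPm hRm
  rw [Finset.sum_congr rfl habove, Finset.sum_congr rfl hbelow, Finset.sum_const, smul_eq_mul,
    ← Set.ncard_eq_toFinset_card B] at hcount
  exact hcount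

theorem ncard_compl_pointsIn (m : Submodule F (Fin n → F)) :
    (pointsIn F n m)ᶜ.ncard =
      Nat.card F ^ finrank F m * ∑ i ∈ Finset.range (n - finrank F m), Nat.card F ^ i := by
  have hle := m.finrank_le
  rw [finrank_fin_fun] at hle
  have htop : (pointsIn F n (⊤ : Submodule F (Fin n → F))) = Set.univ :=
    Set.eq_univ_of_forall fun P => show P.1 ≤ ⊤ from le_top
  have hcard := ncard_pointsIn (⊤ : Submodule F (Fin n → F))
  have hsum := Finset.sum_range_add (fun i => Nat.card F ^ i) (finrank F m) (n - finrank F m)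
  simp only [Nat.add_sub_cancel' hle, pow_add, ← Finset.mul_sum] at hsum
  rw [htop, Set.ncard_univ, ← Set.ncard_add_ncard_compl (pointsIn F n m), ncard_pointsIn,
    finrank_top, finrank_fin_fun, hsum] at hcard
  exact Nat.add_left_cancel hcard

theorem exists_secant_mul_le (hm : finrank F m < n) {B : Set (ProjPoint F n)}
    (hB : Disjoint B (pointsIn F n m)) :
    ∃ W, m ≤ W ∧ finrank F W = finrank F m + 1 ∧
      secant F n B W * ∑ i ∈ Finset.range (n - finrank F m), Nat.card F ^ i ≤ B.ncard := by
  obtain ⟨P₀, -, hP₀⟩ := exists_notMem_pointsIn (W := (⊤ : Submodule F (Fin n → F))) (m := m)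
    (by rwa [finrank_top, finrank_fin_fun])
  obtain ⟨P, hP, hle⟩ := Finset.exists_le_of_sum_le (s := (pointsIn F n m)ᶜ.toFinite.toFinset)
    (f := fun P => secant F n B (m ⊔ P.1) *
      ∑ i ∈ Finset.range (n - finrank F m), Nat.card F ^ i) (g := fun _ => B.ncard)
    ⟨P₀, by simpa using hP₀⟩ (by
      rw [← Finset.sum_mul, sum_secant_sup_point m hB, Finset.sum_const, smul_eq_mul,
        ← Set.ncard_eq_toFinset_card, ncard_compl_pointsIn]
      exact le_of_eq (by ring))
  exact ⟨m ⊔ P.1, le_sup_left, finrank_sup_point (by simpa using hP), hle⟩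

theorem exists_secant_le_add_secant (hm : finrank F m < n) {V : Set (ProjPoint F n)} {t : ℕ}
    (hV : V.ncard ≤ (t + 1) * ∑ i ∈ Finset.range (n - finrank F m), Nat.card F ^ i)
    (hVm : secant F n V m ≠ 0) :
    ∃ W, m ≤ W ∧ finrank F W = finrank F m + 1 ∧ secant F n V W ≤ t + secant F n V m := by
  obtain ⟨W, hmW, hW, hle⟩ := exists_secant_mul_le hm (B := V \ pointsIn F n m)
    Set.disjoint_sdiff_left
  have hcard := secant_sdiff_add_secant V (le_top : m ≤ ⊤)
  rw [secant_top, secant_top] at hcard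
  have hlt := lt_of_mul_lt_mul_right' (hle.trans_lt (by omega :
    _ < (t + 1) * ∑ i ∈ Finset.range (n - finrank F m), Nat.card F ^ i))
  exact ⟨W, hmW, hW, by have := secant_sdiff_add_secant V hmW; omega⟩

end ProjectiveSpace

section Code

open Polynomial

variable {F : Type} [Field F] {p n : ℕ} {c : ProjPoint F n → ZMod p}

theorem exists_polynomial_eval_eq_sum_ite [Fintype F] [DecidableEq F] (α β γ : F) (j : ℕ) :
    ∃ M : F[X], M.natDegree ≤ j ∧
      ∀ y, M.eval y = ∑ x, (if α * x + (β * y + γ) = 0 then 1 else 0) * x ^ j := by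
  by_cases hα : α = 0
  · by_cases hj : j < Fintype.card F - 1
    · exact ⟨0, by simp, fun y => by simp [hα, FiniteField.sum_pow_lt_card_sub_one F j hj]⟩
    · refine ⟨C (∑ x, x ^ j) * (1 - (C β * X + C γ) ^ (Fintype.card F - 1)), ?_, fun y => ?_⟩
      · refine (natDegree_C_mul_le _ _).trans ((natDegree_sub_le _ _).trans ?_)
        rw [natDegree_one, Nat.zero_max]
        exact (natDegree_pow_le_of_le _ natDegree_linear_le).trans (by omega)
      · simp only [hα, zero_mul, zero_add, ← Finset.mul_sum, eval_mul, eval_C, eval_sub, eval_one,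
          eval_pow, eval_add, eval_X]
        split_ifs with h
        · rw [h, zero_pow (Nat.sub_ne_zero_of_lt Fintype.one_lt_card), sub_zero, mul_comm]
        · rw [FiniteField.pow_card_sub_one_eq_one _ h, sub_self, mul_zero, zero_mul]
  · refine ⟨(C (-β / α) * X + C (-γ / α)) ^ j,
      (natDegree_pow_le_of_le _ natDegree_linear_le).trans (by omega), fun y => ?_⟩
    have hroot (x : F) : α * x + (β * y + γ) = 0 ↔ x = -β / α * y + -γ / α := by
      rw [← mul_right_inj' hα (b := x)]
      have : α * (-β / α * y + -γ / α) = -(β * y + γ) := by field_simp; ring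
      rw [this, eq_neg_iff_add_eq_zero]
    simp [hroot]

theorem exists_polynomial_eval_eq_sum_of_mem_hypCode [Fintype F] [CharP F p] (hn : n ≠ 0)
    (hc : c ∈ hypCode F p n) {e₁ e₂ e₃ : Fin n → F}
    (hne : ∀ y x : F, x • e₁ + (y • e₂ + e₃) ≠ 0) (j : ℕ) :
    ∃ M : F[X], M.natDegree ≤ j ∧
      ∀ y, M.eval y = ∑ x, ZMod.castHom (dvd_refl p) F (c (spanPoint _ (hne y x))) * x ^ j := by
  classical
  induction hc using Submodule.span_induction with
  | mem v hv =>
    obtain ⟨H, hH, rfl⟩ := hv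
    obtain ⟨φ, rfl⟩ := exists_eq_ker_of_finrank_add_one (hH ▸ Nat.sub_one_add_one hn)
    obtain ⟨M, hdeg, hM⟩ := exists_polynomial_eval_eq_sum_ite (φ e₁) (φ e₂) (φ e₃) j
    refine ⟨M, hdeg, fun y => (hM y).trans (Finset.sum_congr rfl fun x _ => ?_)⟩
    have hmem : spanPoint _ (hne y x) ∈ pointsIn F n (LinearMap.ker φ) ↔
        φ e₁ * x + (φ e₂ * y + φ e₃) = 0 := by
      rw [spanPoint_mem_pointsIn, LinearMap.mem_ker]
      simp only [map_add, map_smul, smul_eq_mul, mul_comm]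
    simp only [charVec, Set.indicator_apply, hmem, Pi.one_apply]
    split_ifs <;> simp
  | zero => exact ⟨0, by simp, by simp⟩
  | add a b _ _ ha hb =>
    obtain ⟨M, hMdeg, hM⟩ := ha
    obtain ⟨N, hNdeg, hN⟩ := hb
    exact ⟨M + N, natDegree_add_le_of_degree_le hMdeg hNdeg, fun y => by
      simp only [eval_add, hM, hN, Pi.add_apply, map_add, add_mul, Finset.sum_add_distrib]⟩
  | smul a b _ hb =>
    obtain ⟨M, hdeg, hM⟩ := hb
    exact ⟨C (ZMod.castHom (dvd_refl p) F a) * M, (natDegree_C_mul_le _ _).trans hdeg, fun y => by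
      simp only [eval_mul, eval_C, hM, Pi.smul_apply, smul_eq_mul, map_mul, Finset.mul_sum,
        mul_assoc]⟩

theorem secant_span_pair {A : Set (ProjPoint F n)} {e u : Fin n → F} (he : e ≠ 0)
    (heA : spanPoint e he ∉ A) (hne : ∀ x : F, x • e + u ≠ 0) :
    secant F n A (Submodule.span F {e, u}) = {x | spanPoint _ (hne x) ∈ A}.ncard := by
  let f (x : F) : ProjPoint F n := spanPoint _ (hne x)
  have hf : Function.Injective f := by
    intro x y hxy
    obtain ⟨a, ha⟩ := spanPoint_eq_spanPoint.1 hxy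
    by_cases ha1 : a = 1
    · rw [ha1, one_smul, add_left_inj] at ha
      exact (smul_left_injective F he ha).symm
    · refine absurd ?_ (hne ((a - 1)⁻¹ * (a * y - x)))
      refine (smul_eq_zero_iff_right (sub_ne_zero.2 ha1)).1 ?_
      rw [smul_add, smul_smul, mul_inv_cancel_left₀ (sub_ne_zero.2 ha1)]
      linear_combination (norm := module) ha
  have himage : f '' {x | f x ∈ A} = A ∩ pointsIn F n (Submodule.span F {e, u}) := by
    ext P
    constructor
    · rintro ⟨x, hx, rfl⟩
      exact ⟨hx, spanPoint_mem_pointsIn.2 (Submodule.mem_span_pair.2 ⟨x, 1, by rw [one_smul]⟩)⟩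
    · rintro ⟨hPA, hP⟩
      obtain ⟨v, hv, rfl⟩ := exists_spanPoint_eq P
      obtain ⟨a, b, hab⟩ := Submodule.mem_span_pair.1 (spanPoint_mem_pointsIn.1 hP)
      have hb : b ≠ 0 := by
        rintro rfl
        rw [zero_smul, add_zero] at hab
        exact heA (spanPoint_eq_spanPoint.2 ⟨a, hab⟩ ▸ hPA)
      have hfP : spanPoint v hv = f (b⁻¹ * a) :=
        spanPoint_eq_spanPoint.2 ⟨b, by rw [smul_add, smul_smul, mul_inv_cancel_left₀ hb, hab]⟩
      exact ⟨b⁻¹ * a, show f _ ∈ A from hfP ▸ hPA, hfP.symm⟩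
  rw [secant, ← himage, Set.ncard_image_of_injective _ hf]

theorem sum_secant_sub_le_of_mem_hypCode [Fintype F] [Fact p.Prime] [CharP F p]
    (hc : c ∈ hypCode F p n) {e₁ e₂ e₃ : Fin n → F} (he₁ : e₁ ≠ 0)
    (hc₁ : c (spanPoint e₁ he₁) = 0) (hne : ∀ y x : F, x • e₁ + (y • e₂ + e₃) ≠ 0) (y₀ : F) :
    ∑ y : F, (secant F n (Function.support c) (Submodule.span F {e₁, y₀ • e₂ + e₃}) -
        secant F n (Function.support c) (Submodule.span F {e₁, y • e₂ + e₃})) ≤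
      secant F n (Function.support c) (Submodule.span F {e₁, y₀ • e₂ + e₃}) *
        (secant F n (Function.support c) (Submodule.span F {e₁, y₀ • e₂ + e₃}) - 1) := by
  have hn : n ≠ 0 := by
    rintro rfl
    exact he₁ (Subsingleton.elim _ _)
  choose M hdeg hM using exists_polynomial_eval_eq_sum_of_mem_hypCode hn hc hne
  have hsupp (y : F) : secant F n (Function.support c) (Submodule.span F {e₁, y • e₂ + e₃}) =
      (Function.support fun x =>
        ZMod.castHom (dvd_refl p) F (c (spanPoint _ (hne y x)))).ncard := by
    rw [secant_span_pair he₁ (Function.notMem_support.2 hc₁) (hne y)]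
    congr 1
    ext x
    exact (_root_.map_ne_zero _).symm
  simp only [hsupp]
  exact sum_ncard_support_sub_le id Function.injective_id _ M hdeg hM Finset.univ y₀

theorem sum_eq_sum_of_mem_hypCode [Finite F] (hF : (Nat.card F : ZMod p) = 0)
    (hc : c ∈ hypCode F p n) {U W : Submodule F (Fin n → F)} (hU : 2 ≤ finrank F U)
    (hW : 2 ≤ finrank F W) :
    ∑ P ∈ (pointsIn F n U).toFinite.toFinset, c P =
      ∑ P ∈ (pointsIn F n W).toFinite.toFinset, c P := by
  induction hc using Submodule.span_induction with
  | mem v hv =>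
    obtain ⟨H, hH, rfl⟩ := hv
    have hone {W : Submodule F (Fin n → F)} (hW : 2 ≤ finrank F W) :
        ∑ P ∈ (pointsIn F n W).toFinite.toFinset, charVec F p n (pointsIn F n H) P = 1 := by
      have hdim := Submodule.finrank_sup_add_finrank_inf_eq H W
      have hsup := (H ⊔ W).finrank_le
      rw [finrank_fin_fun] at hsup
      rw [charVec, sum_indicator_one_eq_ncard, ← pointsIn_inf,
        natCast_ncard_pointsIn hF (by omega)]
    rw [hone hU, hone hW]
  | zero => simp
  | add a b _ _ ha hb => simp only [Pi.add_apply, Finset.sum_add_distrib, ha, hb]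
  | smul a b _ hb => simp only [Pi.smul_apply, ← Finset.smul_sum, hb]

theorem natCast_secant_of_charVec_mem_hypCode [Finite F] (hF : (Nat.card F : ZMod p) = 0)
    {V : Set (ProjPoint F n)} (hV : charVec F p n V ∈ hypCode F p n)
    {W : Submodule F (Fin n → F)} (hW : 2 ≤ finrank F W) :
    (secant F n V W : ZMod p) = V.ncard := by
  have h := sum_eq_sum_of_mem_hypCode hF hV hW (hW.trans (Submodule.finrank_mono le_top))
  rw [charVec, sum_indicator_one_eq_ncard, sum_indicator_one_eq_ncard] at h
  rwa [← secant_top V]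

end Code

section Plane

open Configuration Configuration.ProjectivePlane

variable {F : Type} [Field F] {p n : ℕ} {π : Submodule F (Fin n → F)}

/-- The lines of the projective space contained in `π`. With the points `pointsIn F n π` they form
a projective plane when `π` is three-dimensional. -/
abbrev PlaneLine (π : Submodule F (Fin n → F)) : Type :=
  {l : Submodule F (Fin n → F) // l ≤ π ∧ finrank F l = 2}

instance : Membership (pointsIn F n π) (PlaneLine π) :=
  ⟨fun l P => P.1 ∈ pointsIn F n l.1⟩

theorem PlaneLine.mem_iff {P : pointsIn F n π} {l : PlaneLine π} :
    P ∈ l ↔ P.1 ∈ pointsIn F n l.1 :=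
  Iff.rfl

theorem finrank_sup_points {P R : ProjPoint F n} (hPR : P ≠ R) : finrank F ↥(P.1 ⊔ R.1) = 2 := by
  rw [finrank_sup_point fun h => hPR (ProjPoint.eq_of_le h).symm, P.2]

theorem sup_points_eq {P R : ProjPoint F n} (hPR : P ≠ R) {l : Submodule F (Fin n → F)}
    (hl : finrank F l = 2) (hP : P ∈ pointsIn F n l) (hR : R ∈ pointsIn F n l) :
    P.1 ⊔ R.1 = l :=
  Submodule.eq_of_le_of_finrank_eq (sup_le hP hR) ((finrank_sup_points hPR).trans hl.symm)

section ProjectivePlane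

variable [hπ : Fact (finrank F π = 3)]

theorem PlaneLine.finrank_inf {l m : PlaneLine π} (hlm : l ≠ m) :
    finrank F ↥(l.1 ⊓ m.1) = 1 := by
  have hlt : l.1 < l.1 ⊔ m.1 := left_lt_sup.2 fun h =>
    hlm (Subtype.ext (Submodule.eq_of_le_of_finrank_eq h (m.2.2.trans l.2.2.symm)).symm)
  have hfin := Submodule.finrank_lt_finrank_of_lt hlt
  have hle := Submodule.finrank_mono (sup_le l.2.1 m.2.1)
  have hdim := Submodule.finrank_sup_add_finrank_inf_eq l.1 m.1
  rw [hπ.out] at hle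
  rw [l.2.2, m.2.2] at hdim
  rw [l.2.2] at hfin
  omega

/-- The line of `π` on which a nonzero functional vanishes. -/
def PlaneLine.ker (φ : Dual F π) (hφ : φ ≠ 0) : PlaneLine π :=
  ⟨(LinearMap.ker φ).map π.subtype, Submodule.map_subtype_le π _, by
    have hker := Module.Dual.finrank_ker_add_one_of_ne_zero hφ
    rw [hπ.out] at hker
    rw [Submodule.finrank_map_subtype_eq]
    omega⟩

theorem PlaneLine.mem_ker {φ : Dual F π} {hφ : φ ≠ 0} {v : π} {hv : (v : Fin n → F) ≠ 0} :
    ⟨spanPoint v.1 hv, spanPoint_mem_pointsIn.2 v.2⟩ ∈ PlaneLine.ker φ hφ ↔ φ v = 0 := by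
  rw [PlaneLine.mem_iff, spanPoint_mem_pointsIn]
  simp [PlaneLine.ker]

theorem PlaneLine.exists_notMem (P : pointsIn F n π) : ∃ l : PlaneLine π, P ∉ l := by
  obtain ⟨P, hP⟩ := P
  obtain ⟨v, hv, rfl⟩ := exists_spanPoint_eq P
  lift v to π using spanPoint_mem_pointsIn.1 hP
  have hv0 : v ≠ 0 := by simpa using hv
  obtain ⟨φ, hφ⟩ := not_forall.1 (mt (Module.forall_dual_apply_eq_zero_iff F v).1 hv0)
  exact ⟨PlaneLine.ker φ fun h => hφ (by rw [h, LinearMap.zero_apply]),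
    fun h => hφ (PlaneLine.mem_ker.1 h)⟩

/- The three coordinate points together with the lines `x₁ = x₂`, `x₀ = 0` and `x₀ = x₂`. -/
theorem PlaneLine.exists_config :
    ∃ (p₁ p₂ p₃ : pointsIn F n π) (l₁ l₂ l₃ : PlaneLine π), p₁ ∉ l₂ ∧ p₁ ∉ l₃ ∧ p₂ ∉ l₁ ∧
      p₂ ∈ l₂ ∧ p₂ ∈ l₃ ∧ p₃ ∉ l₁ ∧ p₃ ∈ l₂ ∧ p₃ ∉ l₃ := by
  let b := finBasisOfFinrankEq F π hπ.out
  have hb (i : Fin 3) : (b i : Fin n → F) ≠ 0 := by simpa using b.ne_zero i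
  have hne {φ : Dual F π} (i : Fin 3) (hφ : φ (b i) ≠ 0) : φ ≠ 0 := by
    rintro rfl
    exact hφ rfl
  let point (i : Fin 3) : pointsIn F n π :=
    ⟨spanPoint (b i) (hb i), spanPoint_mem_pointsIn.2 (b i).2⟩
  refine ⟨point 0, point 1, point 2,
    PlaneLine.ker (b.coord 1 - b.coord 2) (hne 1 (by simp)),
    PlaneLine.ker (b.coord 0) (hne 0 (by simp)),
    PlaneLine.ker (b.coord 0 - b.coord 2) (hne 0 (by simp)), ?_⟩
  simp only [point, PlaneLine.mem_ker]
  simp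

noncomputable instance : ProjectivePlane (pointsIn F n π) (PlaneLine π) where
  exists_point l := by
    have hlt : finrank F l.1 < finrank F π := by rw [hπ.out, l.2.2]; decide
    obtain ⟨P, hP, hPl⟩ := exists_notMem_pointsIn hlt
    exact ⟨⟨P, hP⟩, hPl⟩
  exists_line := PlaneLine.exists_notMem
  eq_or_eq {P R l m} hPl hRl hPm hRm := or_iff_not_imp_left.2 fun hPR => by
    have hPR : P.1 ≠ R.1 := Subtype.coe_ne_coe.2 hPR
    exact Subtype.ext
      ((sup_points_eq hPR l.2.2 hPl hRl).symm.trans (sup_points_eq hPR m.2.2 hPm hRm))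
  mkPoint {l m} hlm := ⟨⟨l.1 ⊓ m.1, PlaneLine.finrank_inf hlm⟩, inf_le_left.trans l.2.1⟩
  mkPoint_ax {l m} _ := ⟨inf_le_left (a := l.1), inf_le_right (a := l.1)⟩
  mkLine {P R} hPR :=
    ⟨P.1.1 ⊔ R.1.1, sup_le P.2 R.2, finrank_sup_points (Subtype.coe_ne_coe.2 hPR)⟩
  mkLine_ax {P R} _ := ⟨le_sup_left (a := P.1.1), le_sup_right (a := P.1.1)⟩
  exists_config := PlaneLine.exists_config

end ProjectivePlane

theorem ncard_preimage_val_inter (A B : Set (ProjPoint F n)) (hB : B ⊆ pointsIn F n π) :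
    (((↑) : pointsIn F n π → ProjPoint F n) ⁻¹' A ∩ (↑) ⁻¹' B).ncard = (A ∩ B).ncard := by
  rw [← Set.preimage_inter]
  refine Set.ncard_preimage_of_injective_subset_range Subtype.val_injective ?_
  rw [Subtype.range_coe]
  exact Set.inter_subset_right.trans hB

theorem lineSecant_preimage_val (A : Set (ProjPoint F n)) (l : PlaneLine π) :
    lineSecant ((↑) ⁻¹' A : Set (pointsIn F n π)) l = secant F n A l.1 :=
  ncard_preimage_val_inter A (pointsIn F n l.1) fun _ hP => le_trans hP l.2.1

theorem ncard_preimage_val (A : Set (ProjPoint F n)) :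
    ((↑) ⁻¹' A : Set (pointsIn F n π)).ncard = secant F n A π := by
  have h := ncard_preimage_val_inter A (pointsIn F n π) subset_rfl
  rwa [Subtype.coe_preimage_self, Set.inter_univ] at h

theorem order_planeLine [Finite F] [Fact (finrank F π = 3)] :
    order (pointsIn F n π) (PlaneLine π) = Nat.card F := by
  obtain ⟨_, _, _, l, _⟩ := PlaneLine.exists_config (π := π)
  have h := lineSecant_preimage_val Set.univ l
  rw [lineSecant, secant, Set.preimage_univ, Set.univ_inter, Set.univ_inter, ncard_setOf_mem,
    ncard_pointsIn, l.2.2, Finset.sum_range_succ, Finset.sum_range_one, pow_zero, pow_one] at h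
  omega

theorem mem_span_pair_of_add_mem {e₁ e₂ e₃ : Fin n → F} {y y' : F} (hy : y ≠ y')
    (h : y' • e₂ + e₃ ∈ Submodule.span F {e₁, y • e₂ + e₃}) :
    e₂ ∈ Submodule.span F {e₁, y • e₂ + e₃} := by
  have hsub := Submodule.sub_mem _ (Submodule.mem_span_of_mem (by simp)) h (x := y • e₂ + e₃)
  rwa [add_sub_add_right_eq_sub, ← sub_smul, Submodule.smul_mem_iff _ (sub_ne_zero.2 hy)] at hsub

theorem notMem_span_pair_of_notMem {m : Submodule F (Fin n → F)} {e₁ e₂ u : Fin n → F}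
    (he₁ : e₁ ∈ m) (he₂ : e₂ ∈ m) (hu : u ∉ m) (hspan : e₂ ∉ F ∙ e₁) :
    e₂ ∉ Submodule.span F {e₁, u} := by
  intro h
  obtain ⟨a, b, hab⟩ := Submodule.mem_span_pair.1 h
  by_cases hb : b = 0
  · exact hspan (Submodule.mem_span_singleton.2 ⟨a, by rw [← hab, hb, zero_smul, add_zero]⟩)
  · refine hu ((Submodule.smul_mem_iff m hb).1 ?_)
    rw [eq_sub_of_add_eq' hab]
    exact m.sub_mem he₂ (m.smul_mem a he₁)

theorem finrank_span_pair_of_notMem {m : Submodule F (Fin n → F)} {e u : Fin n → F} (he : e ≠ 0)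
    (hem : e ∈ m) (hu : u ∉ m) : finrank F (Submodule.span F {e, u}) = 2 := by
  have hu0 : u ≠ 0 := by
    rintro rfl
    exact hu m.zero_mem
  have hne : spanPoint e he ≠ spanPoint u hu0 := by
    intro h
    rw [← spanPoint_mem_pointsIn (hv := he), h, spanPoint_mem_pointsIn] at hem
    exact hu hem
  have hsup : Submodule.span F {e, u} = (spanPoint e he).1 ⊔ (spanPoint u hu0).1 :=
    Submodule.span_insert e {u}
  rw [hsup, finrank_sup_points hne]

/- In coordinates with `Z = ⟨e₁⟩`, `m = ⟨e₁, e₂⟩` and `l = ⟨e₁, e₃⟩`, the lines through `Z` other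
than `m` are the `⟨e₁, y e₂ + e₃⟩`. -/
theorem exists_pencil_coordinates {Z : pointsIn F n π} {l m : PlaneLine π} (hZl : Z ∈ l)
    (hZm : Z ∈ m) (hlm : l ≠ m) :
    ∃ (e₁ e₂ e₃ : Fin n → F) (he₁ : e₁ ≠ 0) (f : F ↪ PlaneLine π), spanPoint e₁ he₁ = Z.1 ∧
      (∀ y x : F, x • e₁ + (y • e₂ + e₃) ≠ 0) ∧ f 0 = l ∧ (∀ y, Z ∈ f y ∧ f y ≠ m) ∧
      ∀ y, (f y).1 = Submodule.span F {e₁, y • e₂ + e₃} := by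
  obtain ⟨e₁, he₁, hZ₁⟩ := exists_spanPoint_eq Z.1
  have he₁mem {k : PlaneLine π} : Z ∈ k ↔ e₁ ∈ k.1 := by
    rw [PlaneLine.mem_iff, ← hZ₁, spanPoint_mem_pointsIn]
  rw [he₁mem] at hZl hZm
  obtain ⟨e₂, he₂m, he₂⟩ : ∃ e₂ ∈ m.1, e₂ ∉ F ∙ e₁ := by
    refine SetLike.not_le_iff_exists.1 fun h => ?_
    have hfin := Submodule.finrank_mono h
    rw [m.2.2, finrank_span_singleton he₁] at hfin
    omega
  obtain ⟨e₃, he₃l, he₃m⟩ : ∃ e₃ ∈ l.1, e₃ ∉ m.1 := SetLike.not_le_iff_exists.1 fun h =>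
    hlm (Subtype.ext (Submodule.eq_of_le_of_finrank_eq h (l.2.2.trans m.2.2.symm)))
  have hu (y : F) : y • e₂ + e₃ ∉ m.1 := mt (m.1.add_mem_iff_right (m.1.smul_mem y he₂m)).1 he₃m
  have huπ (y : F) : y • e₂ + e₃ ∈ π := π.add_mem (π.smul_mem y (m.2.1 he₂m)) (l.2.1 he₃l)
  let line (y : F) : PlaneLine π := ⟨Submodule.span F {e₁, y • e₂ + e₃},
    Submodule.span_le.2 (Set.pair_subset (m.2.1 hZm) (huπ y)),
    finrank_span_pair_of_notMem he₁ hZm (hu y)⟩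
  have he₂line (y : F) : e₂ ∉ (line y).1 := notMem_span_pair_of_notMem hZm he₂m (hu y) he₂
  have hline : Function.Injective line := by
    intro y y' h
    by_contra hy
    refine he₂line y (mem_span_pair_of_add_mem hy ?_)
    rw [show Submodule.span F {e₁, y • e₂ + e₃} = (line y').1 from congrArg Subtype.val h]
    exact Submodule.mem_span_of_mem (by simp)
  refine ⟨e₁, e₂, e₃, he₁, ⟨line, hline⟩, hZ₁, fun y x h => ?_, ?_, fun y => ⟨?_, ?_⟩, fun y => rfl⟩
  · exact hu y ((m.1.add_mem_iff_right (m.1.smul_mem x hZm)).1 (h ▸ m.1.zero_mem))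
  · refine Subtype.ext (Submodule.eq_of_le_of_finrank_eq ?_ ((line 0).2.2.trans l.2.2.symm))
    exact Submodule.span_le.2 (Set.pair_subset hZl (by simpa using he₃l))
  · exact he₁mem.2 (Submodule.mem_span_of_mem (Set.mem_insert _ _))
  · exact fun h => he₂line y ((congrArg Subtype.val h).ge he₂m)

theorem hasSecantBound_of_mem_hypCode [Finite F] [Fact p.Prime] [CharP F p]
    [Fact (finrank F π = 3)] {c : ProjPoint F n → ZMod p} (hc : c ∈ hypCode F p n) :
    HasSecantBound (PlaneLine π) ((↑) ⁻¹' Function.support c : Set (pointsIn F n π)) := by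
  classical
  cases nonempty_fintype F
  intro Z hZ l m hZl hZm hlm
  obtain ⟨e₁, e₂, e₃, he₁, f, hZ₁, hne, rfl, hf, hspan⟩ := exists_pencil_coordinates hZl hZm hlm
  have hcZ : c (spanPoint e₁ he₁) = 0 := by rwa [hZ₁, ← Function.notMem_support]
  have hbound := sum_secant_sub_le_of_mem_hypCode hc he₁ hcZ hne 0
  simp only [← hspan, ← lineSecant_preimage_val] at hbound
  have hpencil := sum_lineSecant_linesThrough (L := PlaneLine π) hZ
  rw [order_planeLine, Nat.card_eq_fintype_card]
  set s := lineSecant (L := PlaneLine π) ((↑) ⁻¹' Function.support c : Set (pointsIn F n π))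
  have hsum : ∑ y, s (f y) + s m ≤ ∑ k ∈ linesThrough (PlaneLine π) Z, s k := by
    have hm : m ∉ Finset.univ.map f := by simpa using fun y => (hf y).2
    rw [add_comm, ← Finset.sum_map, ← Finset.sum_insert hm]
    refine Finset.sum_le_sum_of_subset (Finset.insert_subset (mem_linesThrough.2 hZm) ?_)
    simpa [Finset.subset_iff] using fun y => (hf y).1
  have hsub : Fintype.card F * s (f 0) ≤ ∑ y, (s (f 0) - s (f y)) + ∑ y, s (f y) := by
    rw [← Finset.sum_add_distrib, ← smul_eq_mul, ← Finset.card_univ, ← Finset.sum_const]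
    exact Finset.sum_le_sum fun y _ => le_tsub_add
  have hsq : s (f 0) * (s (f 0) - 1) + s (f 0) = s (f 0) ^ 2 := by
    cases s (f 0) <;> simp [pow_two, mul_add]
  linarith

/-- The code of the plane `π`: the restrictions of the words of `hypCode` to the points of `π`. -/
def planeCode (p : ℕ) (π : Submodule F (Fin n → F)) :
    Submodule (ZMod p) (pointsIn F n π → ZMod p) :=
  (hypCode F p n).map (LinearMap.funLeft (ZMod p) (ZMod p) (↑))

theorem indicator_preimage_mem_planeCode {A : Set (ProjPoint F n)}
    (hA : charVec F p n A ∈ hypCode F p n) :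
    ((↑) ⁻¹' A : Set (pointsIn F n π)).indicator 1 ∈ planeCode p π :=
  ⟨charVec F p n A, hA, rfl⟩

theorem hasSecantBound_of_mem_planeCode [Finite F] [Fact p.Prime] [CharP F p]
    [Fact (finrank F π = 3)] {c : pointsIn F n π → ZMod p} (hc : c ∈ planeCode p π) :
    HasSecantBound (PlaneLine π) (Function.support c) := by
  obtain ⟨c, hc, rfl⟩ := hc
  exact hasSecantBound_of_mem_hypCode hc

theorem indicator_line_mem_planeCode [hπ : Fact (finrank F π = 3)] (l : PlaneLine π) :
    {P : pointsIn F n π | P ∈ l}.indicator 1 ∈ planeCode p π := by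
  obtain ⟨H, hH, hHπ⟩ := exists_hyperplane_inf_eq l.2.1 (by rw [l.2.2, hπ.out])
  have hpre : {P : pointsIn F n π | P ∈ l} = (↑) ⁻¹' pointsIn F n H := by
    ext P
    rw [Set.mem_ofPred_eq, PlaneLine.mem_iff, ← hHπ, pointsIn_inf]
    exact and_iff_left P.2
  rw [hpre]
  exact indicator_preimage_mem_planeCode (Submodule.subset_span ⟨H, hH, rfl⟩)

theorem natCast_card_eq_zero [Finite F] [CharP F p] : (Nat.card F : ZMod p) = 0 := by
  cases nonempty_fintype F
  rw [ZMod.natCast_eq_zero_iff, ← CharP.cast_eq_zero_iff F p, Nat.card_eq_fintype_card,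
    Nat.cast_card_eq_zero]

section PlaneIntersection

variable [Finite F] [Fact p.Prime] [CharP F p] {q : ℕ} {V : Set (ProjPoint F n)}

theorem natCast_secant_eq_one (hV : charVec F p n V ∈ hypCode F p n)
    (hV1 : (V.ncard : ZMod p) = 1) {l : Submodule F (Fin n → F)} (hl : finrank F l = 2) :
    (secant F n V l : ZMod p) = 1 :=
  (natCast_secant_of_charVec_mem_hypCode natCast_card_eq_zero hV hl.ge).trans hV1

theorem secant_le_or_le (hF : Nat.card F = q ^ 2) (hq : 4 < q) (hn : 2 < n)
    (hV : charVec F p n V ∈ hypCode F p n) (hV1 : (V.ncard : ZMod p) = 1)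
    (hVcard : V.ncard ≤ (q ^ 3 + 1) * ∑ i ∈ Finset.range (n - 2), (q ^ 2) ^ i)
    {l : Submodule F (Fin n → F)} (hl : finrank F l = 2) :
    secant F n V l ≤ q + 1 ∨ q ^ 2 ≤ secant F n V l + q + 1 := by
  have hpos {k : Submodule F (Fin n → F)} (hk : finrank F k = 2) : secant F n V k ≠ 0 :=
    fun h0 => by simpa [h0] using natCast_secant_eq_one hV hV1 hk
  obtain ⟨σ, hlσ, hσ, hsecσ⟩ : ∃ σ, l ≤ σ ∧ finrank F σ = 3 ∧
      secant F n V σ ≤ q ^ 3 + secant F n V l := by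
    have h := exists_secant_le_add_secant (m := l) (V := V) (t := q ^ 3)
    rw [hl, hF] at h
    exact h hn hVcard (hpos hl)
  have : Fact (finrank F σ = 3) := ⟨hσ⟩
  let l' : PlaneLine σ := ⟨l, hlσ, hl⟩
  have hbound : HasSecantBound (PlaneLine σ) ((↑) ⁻¹' V : Set (pointsIn F n σ)) := by
    simpa [Set.support_indicator] using
      hasSecantBound_of_mem_planeCode (indicator_preimage_mem_planeCode hV (π := σ))
  have hdich := hbound.lineSecant_le_or_le (l := l') (order_planeLine.trans hF) hq
    (fun k => lineSecant_preimage_val V k ▸ hpos k.2.2)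
    (by rwa [lineSecant_preimage_val, ncard_preimage_val])
  rwa [lineSecant_preimage_val] at hdich

theorem exists_planeLines_indicator_eq_sum [hπ : Fact (finrank F π = 3)]
    (hF : Nat.card F = q ^ 2) (hpq : p ∣ q) (hq : 4 < q) (hq8 : p = 2 → 8 ≤ q)
    (hV : charVec F p n V ∈ hypCode F p n) (hV1 : (V.ncard : ZMod p) = 1)
    (hVcard : V.ncard ≤ (q ^ 3 + 1) * ∑ i ∈ Finset.range (n - 2), (q ^ 2) ^ i)
    (hsize : secant F n V π ≤ q ^ 3 + 2 * q ^ 2)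
    (hlong : q ^ 3 < secant F n V π → ∃ l : PlaneLine π, q ^ 2 + 1 ≤ secant F n V l.1 + q) :
    ∃ T : Finset (PlaneLine π), T.card ≤ q + 1 ∧
      ((↑) ⁻¹' V : Set (pointsIn F n π)).indicator (1 : pointsIn F n π → ZMod p) =
        ∑ l ∈ T, {P | P ∈ l}.indicator 1 := by
  have hn : 2 < n := by
    have hle := π.finrank_le
    rw [hπ.out, finrank_fin_fun] at hle
    omega
  refine exists_card_le_indicator_eq_sum hpq hq hq8 (order_planeLine.trans hF)
    (fun _ => hasSecantBound_of_mem_planeCode) indicator_line_mem_planeCode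
    (indicator_preimage_mem_planeCode hV) (fun l => ?_) (fun l => ?_) ?_ ?_
  · rw [lineSecant_preimage_val, natCast_secant_eq_one hV hV1 l.2.2]
  · rw [lineSecant_preimage_val]
    exact secant_le_or_le hF hq hn hV hV1 hVcard l.2.2
  · rwa [ncard_preimage_val]
  · simpa only [ncard_preimage_val, lineSecant_preimage_val] using hlong

end PlaneIntersection

theorem charVec_inter_pointsIn_eq_sum {V : Set (ProjPoint F n)} {T : Finset (PlaneLine π)}
    (hT : ((↑) ⁻¹' V : Set (pointsIn F n π)).indicator (1 : pointsIn F n π → ZMod p) =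
      ∑ l ∈ T, {P | P ∈ l}.indicator 1) :
    charVec F p n (V ∩ pointsIn F n π) = ∑ l ∈ T, charVec F p n (pointsIn F n l.1) := by
  funext P
  rw [Finset.sum_apply]
  by_cases hP : P ∈ pointsIn F n π
  · have hTP := congrFun hT ⟨P, hP⟩
    rw [Finset.sum_apply] at hTP
    rw [charVec, Set.inter_comm, ← Set.indicator_indicator, Set.indicator_of_mem hP]
    exact hTP
  · rw [charVec, Set.indicator_of_notMem fun h => hP h.2, Finset.sum_eq_zero]
    exact fun l _ => Set.indicator_of_notMem (fun h => hP (le_trans h l.2.1)) 1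

end Plane

theorem IsQuasiHermitian.natCast_ncard {F : Type} [Field F] {p q r : ℕ}
    {V : Set (ProjPoint F (r + 1))} (hV : IsQuasiHermitian F q r V) (hpq : p ∣ q) (hr : r ≠ 0) :
    (V.ncard : ZMod p) = 1 := by
  have hcard := congrArg (Int.cast : ℤ → ZMod p) hV.1
  have hsq : ((-1 : ZMod p) ^ r) * (-1) ^ r = 1 := by
    rw [← mul_pow, neg_one_mul, neg_neg, one_pow]
  push_cast at hcard
  rw [(ZMod.natCast_eq_zero_iff q p).2 hpq, zero_pow two_ne_zero, zero_pow r.succ_ne_zero,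
    zero_pow hr] at hcard
  linear_combination -hcard + hsq

theorem IsQuasiHermitian.ncard_le {F : Type} [Field F] {q r : ℕ} {V : Set (ProjPoint F (r + 1))}
    (hV : IsQuasiHermitian F q r V) (hq : 1 < q) (hr : 3 ≤ r) :
    V.ncard ≤ (q ^ 3 + 1) * ∑ i ∈ Finset.range (r - 1), (q ^ 2) ^ i := by
  obtain ⟨k, rfl⟩ := Nat.exists_eq_add_of_le' hr
  have hcard := hV.1
  have hgeom := geom_sum_mul ((q : ℤ) ^ 2) (k + 2)
  zify at hq ⊢
  have hy : (q : ℤ) ≤ q ^ (k + 1) := le_self_pow₀ hq.le k.succ_ne_zero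
  refine le_of_mul_le_mul_right ?_ (by nlinarith : (0 : ℤ) < (q : ℤ) ^ 2 - 1)
  rw [mul_assoc, show k + 3 - 1 = k + 2 from rfl, hgeom, hcard]
  have hprod : 0 ≤ (q : ℤ) ^ 2 * ((q ^ (k + 1) - q) * (q ^ (k + 1) + 1)) := by
    have := sub_nonneg.2 hy
    positivity
  have hmid : 0 ≤ (q : ℤ) ^ 2 * q ^ (k + 1) * (q - 1) := by
    have := sub_nonneg.2 hq.le
    positivity
  rcases neg_one_pow_eq_or ℤ (k + 3) with hsign | hsign <;> rw [hsign] <;>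
    ring_nf at hprod hmid ⊢ <;> linarith

theorem eight_le_two_pow {h : ℕ} (hh : 4 < 2 ^ h) : 8 ≤ 2 ^ h :=
  Nat.pow_le_pow_right two_pos ((Nat.pow_lt_pow_iff_right (a := 2) (n := 2) one_lt_two).1 hh)

theorem stmt7_general (p h q n : ℕ) (hp : p.Prime) (hq : q = p ^ h) (hq4 : 4 < q)
    (F : Type) [Field F] [Fintype F] (hF : Fintype.card F = q ^ 2)
    (V : Set (ProjPoint F n)) (hV1 : (V.ncard : ZMod p) = 1)
    (hVcard : V.ncard ≤ (q ^ 3 + 1) * ∑ i ∈ Finset.range (n - 2), (q ^ 2) ^ i)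
    (hcode : charVec F p n V ∈ hypCode F p n)
    (π : Submodule F (Fin n → F)) (hπ : finrank F π = 3)
    (hsize : secant F n V π ≤ q ^ 3 + 2 * q ^ 2)
    (hsec : q ^ 3 + 1 ≤ secant F n V π →
      ∃ ℓ : Submodule F (Fin n → F), ℓ ≤ π ∧ finrank F ℓ = 2 ∧
        q ^ 2 - q + 1 ≤ secant F n V ℓ) :
    ∃ L : Finset (Submodule F (Fin n → F)), L.card ≤ q + 1 ∧
      (∀ ℓ ∈ L, ℓ ≤ π ∧ finrank F ℓ = 2) ∧
      charVec F p n (V ∩ pointsIn F n π) = ∑ ℓ ∈ L, charVec F p n (pointsIn F n ℓ) := by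
  have : Fact p.Prime := ⟨hp⟩
  have : Fact (finrank F π = 3) := ⟨hπ⟩
  have : CharP F p := charP_of_card_eq_prime_pow (f := h * 2) (by rw [hF, hq, pow_mul])
  have hpq : p ∣ q := by
    refine hq ▸ dvd_pow_self p ?_
    rintro rfl
    rw [hq, pow_zero] at hq4
    omega
  have hq8 : p = 2 → 8 ≤ q := by
    rintro rfl
    exact hq ▸ eight_le_two_pow (hq ▸ hq4)
  rw [← Nat.card_eq_fintype_card] at hF
  have hlong (hlt : q ^ 3 < secant F n V π) :
      ∃ l : PlaneLine π, q ^ 2 + 1 ≤ secant F n V l.1 + q := by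
    obtain ⟨l, hlπ, hl, hsecl⟩ := hsec hlt
    exact ⟨⟨l, hlπ, hl⟩, show q ^ 2 + 1 ≤ secant F n V l + q by omega⟩
  obtain ⟨T, hT, hsum⟩ :=
    exists_planeLines_indicator_eq_sum hF hpq hq4 hq8 hcode hV1 hVcard hsize hlong
  refine ⟨T.map (Function.Embedding.subtype _), by rwa [Finset.card_map], ?_, ?_⟩
  · simp only [Finset.mem_map]
    rintro _ ⟨l, -, rfl⟩
    exact l.2
  · rw [Finset.sum_map]
    exact charVec_inter_pointsIn_eq_sum hsum

/-- if a plane `π` meets `V` in at most `q³ + 2q²` points and, in case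
`|π ∩ V| ≥ q³ + 1`, some line of `π` meets `π ∩ V` in at least `q² - q + 1` points,
then the characteristic vector of `π ∩ V` is a sum of at most `q + 1` distinct lines
of `π`, each with coefficient 1. -/
theorem stmt7 (p h q r : ℕ) (hp : p.Prime) (hh : 1 ≤ h) (hq : q = p ^ h) (hq4 : 4 < q)
    (hr : 3 ≤ r)
    (F : Type) [Field F] [Fintype F] (hF : Fintype.card F = q ^ 2)
    (V : Set (ProjPoint F (r + 1))) (hV : IsQuasiHermitian F q r V)
    (hcode : charVec F p (r + 1) V ∈ hypCode F p (r + 1))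
    (π : Submodule F (Fin (r + 1) → F)) (hπ : finrank F π = 3)
    (hsize : secant F (r + 1) V π ≤ q ^ 3 + 2 * q ^ 2)
    (hsec : q ^ 3 + 1 ≤ secant F (r + 1) V π →
      ∃ ℓ : Submodule F (Fin (r + 1) → F), ℓ ≤ π ∧ finrank F ℓ = 2 ∧
        q ^ 2 - q + 1 ≤ secant F (r + 1) V ℓ) :
    ∃ L : Finset (Submodule F (Fin (r + 1) → F)), L.card ≤ q + 1 ∧
      (∀ ℓ ∈ L, ℓ ≤ π ∧ finrank F ℓ = 2) ∧
      charVec F p (r + 1) (V ∩ pointsIn F (r + 1) π)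
        = ∑ ℓ ∈ L, charVec F p (r + 1) (pointsIn F (r + 1) ℓ) := by
  have hpq : p ∣ q := hq ▸ dvd_pow_self p (by omega)
  exact stmt7_general p h q (r + 1) hp hq hq4 F hF V (hV.natCast_ncard hpq (by omega))
    (hV.ncard_le (by omega) hr) hcode π hπ hsize hsec
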